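/- arXiv:2511.10778 — 4 statements merged into one kernel-verified Lean document; each statement's English description precedes it below -/
import Mathlib

section
/- Fix a dimension d ≥ 1. There exists a constant C = C(d) > 0 such that for all ν > 0, ε > 0, all k ∈ ℝ^d with k ≠ 0, and all Schwartz functions g, h : ℝ^d → ℂ satisfying the resolvent equation ε·h(v) + i(k·v)·h(v) − ν·Δh(v) = g(v) for all v ∈ ℝ^d, one has ‖h‖_{L²(ℝ^d)} ≤ C · ν^{−1/3} · |k|^{−2/3} · ‖g‖_{L²(ℝ^d)}. -/
open MeasureTheory
open scoped ENNReal RealInnerProductSpace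

/-- The Laplacian of a function `h : ℝ^d → ℂ`, as the sum of the second partial
derivatives in the coordinate directions. -/
noncomputable def lapC {d : ℕ} (h : EuclideanSpace ℝ (Fin d) → ℂ)
    (v : EuclideanSpace ℝ (Fin d)) : ℂ :=
  ∑ i : Fin d,
    fderiv ℝ (fun w => fderiv ℝ h w (EuclideanSpace.single i 1)) v (EuclideanSpace.single i 1)

/-!
On the Fourier side the resolvent equation becomes a transport equation with quadratic damping,
`(ε + ν (2π|ξ|)²) ĥ - ∂_{k / 2π} ĥ = ĝ`. Damping degenerates only on `ξ = 0`, from which the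
transport escapes: testing against `m ĥ`, for a bounded weight `m` which increases in the direction
`k` across the layer where the damping is weak, makes the transport term contribute `∂_k m |ĥ|²`,
and this is of the order `δ = ν^{1/3} |k|^{2/3}` exactly where the damping is smaller than `δ`.
Plancherel's theorem carries the resulting bound `δ ‖ĥ‖ ≤ C ‖ĝ‖` back to `h` and `g`.
-/

open Real
open scoped SchwartzMap FourierTransform LineDeriv Laplacian

section WeightedTransport

variable {E F : Type*} [NormedAddCommGroup E] [NormedSpace ℝ E] [NormedAddCommGroup F]
  [InnerProductSpace ℝ F]

theorem inner_smul_add_inner_lineDerivOp_smulLeftCLM {m : E → ℝ} (hm : m.HasTemperateGrowth)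
    (u : 𝓢(E, F)) (e x : E) :
    ⟪SchwartzMap.smulLeftCLM F m u x, ∂_{e} u x⟫
        + ⟪∂_{e} (SchwartzMap.smulLeftCLM F m u) x, u x⟫
      = lineDeriv ℝ m x e * ‖u x‖ ^ 2 + 2 * (m x * ⟪u x, ∂_{e} u x⟫) := by
  have hmx : DifferentiableAt ℝ m x := hm.1.differentiable (by simp) x
  have leibniz : ∂_{e} (SchwartzMap.smulLeftCLM F m u) x
      = m x • ∂_{e} u x + lineDeriv ℝ m x e • u x := by
    rw [SchwartzMap.lineDerivOp_apply_eq_fderiv, SchwartzMap.smulLeftCLM_apply hm,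
      fderiv_fun_smul hmx u.differentiableAt, SchwartzMap.lineDerivOp_apply_eq_fderiv,
      hmx.lineDeriv_eq_fderiv]
    rfl
  rw [leibniz, SchwartzMap.smulLeftCLM_apply_apply hm, inner_add_left, real_inner_smul_left,
    real_inner_smul_left, real_inner_smul_left, real_inner_self_eq_norm_sq,
    real_inner_comm (u x) (∂_{e} u x)]
  ring

variable [FiniteDimensional ℝ E] [MeasurableSpace E] [BorelSpace E] (μ : Measure E)

theorem integrable_weighted_transport [μ.HasTemperateGrowth] {m : E → ℝ}
    (hm : m.HasTemperateGrowth) (u : 𝓢(E, F)) (e : E) :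
    Integrable (fun x ↦ lineDeriv ℝ m x e * ‖u x‖ ^ 2 + 2 * (m x * ⟪u x, ∂_{e} u x⟫)) μ := by
  simp_rw [← inner_smul_add_inner_lineDerivOp_smulLeftCLM hm]
  exact (SchwartzMap.pairing (innerSL ℝ) _ _).integrable.add
    (SchwartzMap.pairing (innerSL ℝ) _ _).integrable

theorem integral_weighted_transport_eq_zero [μ.IsAddHaarMeasure] {m : E → ℝ}
    (hm : m.HasTemperateGrowth) (u : 𝓢(E, F)) (e : E) :
    ∫ x, (lineDeriv ℝ m x e * ‖u x‖ ^ 2 + 2 * (m x * ⟪u x, ∂_{e} u x⟫)) ∂μ = 0 := by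
  simp_rw [← inner_smul_add_inner_lineDerivOp_smulLeftCLM hm]
  exact (integral_add (SchwartzMap.pairing (innerSL ℝ) _ _).integrable
    (SchwartzMap.pairing (innerSL ℝ) _ _).integrable).trans <| add_eq_zero_iff_eq_neg.2 <|
      SchwartzMap.integral_bilinear_lineDerivOp_right_eq_neg_left _ u (innerSL ℝ) e

theorem integral_norm_sq_eq_norm_toLp_sq [μ.HasTemperateGrowth] (u : 𝓢(E, F)) :
    ∫ x, ‖u x‖ ^ 2 ∂μ = ‖u.toLp 2 μ‖ ^ 2 := by
  rw [← real_inner_self_eq_norm_sq, L2.inner_def]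
  refine integral_congr_ae ?_
  filter_upwards [u.coeFn_toLp 2 μ] with x hx
  rw [hx, real_inner_self_eq_norm_sq]

theorem mul_norm_toLp_le_of_damped_transport [μ.IsAddHaarMeasure] {a m : E → ℝ}
    (hm : m.HasTemperateGrowth) {c M : ℝ} (hc : 0 < c) (e : E)
    (hbound : ∀ x, |m x| ≤ M) (hcoercive : ∀ x, c ≤ m x * a x + lineDeriv ℝ m x e / 2)
    {u f : 𝓢(E, F)} (heq : ∀ x, a x • u x - ∂_{e} u x = f x) :
    c * ‖u.toLp 2 μ‖ ≤ M * ‖f.toLp 2 μ‖ := by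
  have hM : 0 ≤ M := (abs_nonneg _).trans (hbound 0)
  have pointwise (x : E) : c ^ 2 * ‖u x‖ ^ 2 ≤ M ^ 2 * ‖f x‖ ^ 2
      + c * (lineDeriv ℝ m x e * ‖u x‖ ^ 2 + 2 * (m x * ⟪u x, ∂_{e} u x⟫)) := by
    have tested : m x * a x * ‖u x‖ ^ 2 = m x * ⟪u x, f x⟫ + m x * ⟪u x, ∂_{e} u x⟫ := by
      rw [← heq x, inner_sub_right, real_inner_smul_right, real_inner_self_eq_norm_sq]
      ring
    have source : m x * ⟪u x, f x⟫ ≤ M * (‖u x‖ * ‖f x‖) :=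
      (le_abs_self _).trans <| (abs_mul _ _).trans_le <|
        mul_le_mul (hbound x) (abs_real_inner_le_norm _ _) (abs_nonneg _) hM
    have young : 2 * (c * (M * (‖u x‖ * ‖f x‖))) ≤ c ^ 2 * ‖u x‖ ^ 2 + M ^ 2 * ‖f x‖ ^ 2 := by
      linarith [two_mul_le_add_sq (c * ‖u x‖) (M * ‖f x‖)]
    have coercive := mul_le_mul_of_nonneg_right (hcoercive x) (sq_nonneg ‖u x‖)
    linarith [mul_le_mul_of_nonneg_left source hc.le, mul_le_mul_of_nonneg_left coercive hc.le,
      congrArg (c * ·) tested]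
  have hu : Integrable (fun x ↦ ‖u x‖ ^ 2) μ := (u.memLp 2 μ).integrable_norm_pow (by norm_num)
  have hf : Integrable (fun x ↦ ‖f x‖ ^ 2) μ := (f.memLp 2 μ).integrable_norm_pow (by norm_num)
  have hT := integrable_weighted_transport μ hm u e
  have integrated :=
    integral_mono (hu.const_mul _) ((hf.const_mul _).add (hT.const_mul c)) pointwise
  simp only [Pi.add_apply] at integrated
  rw [integral_add (hf.const_mul _) (hT.const_mul c), integral_const_mul, integral_const_mul,
    integral_const_mul, integral_weighted_transport_eq_zero μ hm, mul_zero, add_zero,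
    integral_norm_sq_eq_norm_toLp_sq, integral_norm_sq_eq_norm_toLp_sq, ← mul_pow, ← mul_pow]
    at integrated
  exact le_of_sq_le_sq integrated (by positivity)

end WeightedTransport

/-- The profile, in the direction of transport, of the weight against which the transport equation
is tested: bounded above and away from zero, and increasing on `[-1, 1]`. -/
noncomputable def transportWeight (x : ℝ) : ℝ := 1 + x / (1 + x ^ 2)

namespace transportWeight

theorem hasTemperateGrowth : transportWeight.HasTemperateGrowth := by
  have h : transportWeight = fun x ↦ 1 + x * (1 + ‖x‖ ^ 2) ^ (-1 : ℝ) := by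
    ext x
    rw [transportWeight, rpow_neg_one, norm_eq_abs, sq_abs, div_eq_mul_inv]
  rw [h]
  fun_prop

theorem hasDerivAt (x : ℝ) :
    HasDerivAt transportWeight ((1 - x ^ 2) / (1 + x ^ 2) ^ 2) x := by
  refine (((hasDerivAt_id' x).div ((hasDerivAt_pow 2 x).const_add 1)
    (by positivity)).const_add 1).congr_deriv ?_
  rw [Nat.cast_two, pow_one]
  ring

theorem one_half_le (x : ℝ) : 1 / 2 ≤ transportWeight x := by
  have : -(1 / 2) ≤ x / (1 + x ^ 2) := by
    rw [le_div_iff₀ (by positivity)]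
    linarith [sq_nonneg (1 + x)]
  rw [transportWeight]
  linarith

theorem le_three_halves (x : ℝ) : transportWeight x ≤ 3 / 2 := by
  have : x / (1 + x ^ 2) ≤ 1 / 2 := by
    rw [div_le_iff₀ (by positivity)]
    linarith [sq_nonneg (1 - x)]
  rw [transportWeight]
  linarith

theorem abs_le_three_halves (x : ℝ) : |transportWeight x| ≤ 3 / 2 := by
  rw [abs_of_nonneg (by linarith [one_half_le x])]
  exact le_three_halves x

theorem one_third_le_sq_mul_add_deriv (x : ℝ) :
    1 / 3 ≤ x ^ 2 * transportWeight x + deriv transportWeight x / 2 := by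
  rw [(hasDerivAt x).deriv]
  have lower : x ^ 2 * (1 / 2) ≤ x ^ 2 * transportWeight x := by gcongr; exact one_half_le x
  have rational : 1 / 3 ≤ x ^ 2 * (1 / 2) + (1 - x ^ 2) / (1 + x ^ 2) ^ 2 / 2 := by
    have : x ^ 2 * (1 / 2) + (1 - x ^ 2) / (1 + x ^ 2) ^ 2 / 2 - 1 / 3
        = (3 * (x ^ 2) ^ 3 + (2 * x ^ 2 - 1) ^ 2) / (6 * (1 + x ^ 2) ^ 2) := by
      field_simp
      ring
    linarith [show 0 ≤ (3 * (x ^ 2) ^ 3 + (2 * x ^ 2 - 1) ^ 2) / (6 * (1 + x ^ 2) ^ 2) by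
      positivity]
  linarith

end transportWeight

section QuadraticDamping

variable {E : Type*} [NormedAddCommGroup E] [InnerProductSpace ℝ E]

theorem lineDeriv_comp_const_mul_inner {w : ℝ → ℝ} {c : ℝ} {e x : E}
    (hw : DifferentiableAt ℝ w (c * ⟪e, x⟫)) :
    lineDeriv ℝ (fun y ↦ w (c * ⟪e, y⟫)) x e = deriv w (c * ⟪e, x⟫) * (c * ‖e‖ ^ 2) := by
  have inner_deriv : HasFDerivAt (fun y ↦ c * ⟪e, y⟫) (c • innerSL ℝ e) x :=
    (innerSL ℝ e).hasFDerivAt.const_mul c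
  refine ((hw.hasDerivAt.comp_hasFDerivAt x inner_deriv).hasLineDerivAt e).lineDeriv.trans ?_
  simp

theorem mul_sq_mul_inner_le_mul_norm_sq {δ κ : ℝ} (hδ : 0 < δ) {e : E}
    (hδκ : δ ^ 3 = κ * ‖e‖ ^ 2) (x : E) :
    δ * (δ / ‖e‖ ^ 2 * ⟪e, x⟫) ^ 2 ≤ κ * ‖x‖ ^ 2 := by
  have he : ‖e‖ ≠ 0 := fun h ↦ by simp [h, hδ.ne'] at hδκ
  have hκ : κ = δ ^ 3 / ‖e‖ ^ 2 := by rw [hδκ]; field_simp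
  have cauchy : ⟪e, x⟫ ^ 2 ≤ (‖e‖ * ‖x‖) ^ 2 :=
    sq_le_sq.2 ((abs_real_inner_le_norm e x).trans (le_abs_self _))
  calc δ * (δ / ‖e‖ ^ 2 * ⟪e, x⟫) ^ 2 = δ ^ 3 / ‖e‖ ^ 4 * ⟪e, x⟫ ^ 2 := by ring
    _ ≤ δ ^ 3 / ‖e‖ ^ 4 * (‖e‖ * ‖x‖) ^ 2 := by gcongr
    _ = κ * ‖x‖ ^ 2 := by rw [hκ]; field_simp

variable [FiniteDimensional ℝ E] [MeasurableSpace E] [BorelSpace E]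
  {F : Type*} [NormedAddCommGroup F] [InnerProductSpace ℝ F]

theorem mul_norm_toLp_le_of_quadratically_damped_transport (μ : Measure E) [μ.IsAddHaarMeasure]
    {δ ε κ : ℝ} (hδ : 0 < δ) (hε : 0 ≤ ε) {e : E} (hδκ : δ ^ 3 = κ * ‖e‖ ^ 2) {u f : 𝓢(E, F)}
    (heq : ∀ x, (ε + κ * ‖x‖ ^ 2) • u x - ∂_{e} u x = f x) :
    δ * ‖u.toLp 2 μ‖ ≤ 9 / 2 * ‖f.toLp 2 μ‖ := by
  have he : ‖e‖ ≠ 0 := fun h ↦ by simp [h, hδ.ne'] at hδκ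
  have temperate : (fun x ↦ transportWeight (δ / ‖e‖ ^ 2 * ⟪e, x⟫)).HasTemperateGrowth :=
    transportWeight.hasTemperateGrowth.comp (by fun_prop)
  have coercive (x : E) : δ / 3 ≤ transportWeight (δ / ‖e‖ ^ 2 * ⟪e, x⟫) * (ε + κ * ‖x‖ ^ 2)
      + lineDeriv ℝ (fun y ↦ transportWeight (δ / ‖e‖ ^ 2 * ⟪e, y⟫)) x e / 2 := by
    rw [lineDeriv_comp_const_mul_inner (transportWeight.hasDerivAt _).differentiableAt,
      div_mul_cancel₀ δ (pow_ne_zero 2 he)]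
    set t := δ / ‖e‖ ^ 2 * ⟪e, x⟫
    have damping : δ * t ^ 2 ≤ ε + κ * ‖x‖ ^ 2 := by
      linarith [mul_sq_mul_inner_le_mul_norm_sq hδ hδκ x]
    have weight_nonneg : 0 ≤ transportWeight t := by linarith [transportWeight.one_half_le t]
    linarith [mul_le_mul_of_nonneg_left damping weight_nonneg,
      mul_le_mul_of_nonneg_left (transportWeight.one_third_le_sq_mul_add_deriv t) hδ.le]
  linarith [mul_norm_toLp_le_of_damped_transport μ temperate (by positivity : 0 < δ / 3) e
    (fun _ ↦ transportWeight.abs_le_three_halves _) coercive heq]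

end QuadraticDamping

section Resolvent

variable {E F : Type*} [NormedAddCommGroup E] [InnerProductSpace ℝ E] [FiniteDimensional ℝ E]
  [MeasurableSpace E] [BorelSpace E] [NormedAddCommGroup F]

theorem fourier_laplacian_apply [NormedSpace ℂ F] [CompleteSpace F] (h : 𝓢(E, F)) (ξ : E) :
    𝓕 (Δ h) ξ = -((2 * π) ^ 2 * ‖ξ‖ ^ 2) • 𝓕 h ξ := by
  rw [SchwartzMap.laplacian_eq_fourierMultiplierCLM, SchwartzMap.fourierMultiplierCLM_apply,
    FourierTransform.fourier_smul, FourierTransform.fourier_fourierInv_eq, smul_apply,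
    SchwartzMap.smulLeftCLM_apply_apply (by fun_prop), smul_smul, neg_mul]

theorem fourier_I_smul_inner_smul [NormedSpace ℂ F] (k : E) (h : 𝓢(E, F)) :
    𝓕 (Complex.I • SchwartzMap.smulLeftCLM F (inner ℝ · k) h) = -∂_{(2 * π)⁻¹ • k} (𝓕 h) := by
  rw [LineDeriv.lineDerivOp_left_smul, SchwartzMap.lineDerivOp_fourier_eq, neg_smul,
    FourierTransform.fourier_neg, FourierTransform.fourier_smul, FourierTransform.fourier_smul,
    smul_neg, neg_neg, ← Complex.coe_smul, smul_smul]
  congr 1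
  push_cast
  field_simp

theorem fourier_resolvent_eq [NormedSpace ℂ F] [CompleteSpace F] {ν ε : ℝ} {k : E} {g h : 𝓢(E, F)}
    (heq : ∀ v, ε • h v + (Complex.I * ⟪k, v⟫) • h v - ν • Δ h v = g v) (ξ : E) :
    (ε + ν * (2 * π) ^ 2 * ‖ξ‖ ^ 2) • 𝓕 h ξ - ∂_{(2 * π)⁻¹ • k} (𝓕 h) ξ = 𝓕 g ξ := by
  have inner_growth : (fun v ↦ ⟪v, k⟫).HasTemperateGrowth := by fun_prop
  have hg : g = ε • h + Complex.I • SchwartzMap.smulLeftCLM F (inner ℝ · k) h - ν • Δ h := by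
    ext v
    rw [← heq v]
    simp only [add_apply, sub_apply, smul_apply, mul_smul,
      SchwartzMap.smulLeftCLM_apply_apply inner_growth, real_inner_comm v k, Complex.coe_smul]
  rw [hg, sub_eq_add_neg _ (ν • Δ h), FourierTransform.fourier_add, FourierTransform.fourier_add,
    FourierTransform.fourier_neg, fourier_I_smul_inner_smul, FourierTransform.fourier_smul,
    FourierTransform.fourier_smul]
  simp only [add_apply, neg_apply, smul_apply, fourier_laplacian_apply]
  module

theorem mul_norm_toLp_le_of_resolvent_eq [InnerProductSpace ℂ F] [CompleteSpace F] {ν ε δ : ℝ}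
    (hε : 0 ≤ ε) (hδ : 0 < δ) {k : E} (hδν : δ ^ 3 = ν * ‖k‖ ^ 2) {g h : 𝓢(E, F)}
    (heq : ∀ v, ε • h v + (Complex.I * ⟪k, v⟫) • h v - ν • Δ h v = g v) :
    δ * ‖h.toLp 2‖ ≤ 9 / 2 * ‖g.toLp 2‖ := by
  let : InnerProductSpace ℝ F := InnerProductSpace.complexToReal
  have hδκ : δ ^ 3 = ν * (2 * π) ^ 2 * ‖(2 * π)⁻¹ • k‖ ^ 2 := by
    rw [hδν, norm_smul, norm_of_nonneg (by positivity)]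
    field_simp
  have fourier_bound := mul_norm_toLp_le_of_quadratically_damped_transport volume hδ hε hδκ
    (fourier_resolvent_eq heq)
  rwa [SchwartzMap.norm_fourier_toL2_eq, SchwartzMap.norm_fourier_toL2_eq] at fourier_bound

theorem stmt0_general [InnerProductSpace ℂ F] [CompleteSpace F] {ν ε : ℝ} (hν : 0 < ν)
    (hε : 0 ≤ ε) {k : E} (hk : k ≠ 0) {g h : 𝓢(E, F)}
    (heq : ∀ v, ε • h v + (Complex.I * ⟪k, v⟫) • h v - ν • Δ h v = g v) :
    eLpNorm h 2 volume ≤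
      ENNReal.ofReal (9 / 2 * ν ^ (-(1 : ℝ) / 3) * ‖k‖ ^ (-(2 : ℝ) / 3)) * eLpNorm g 2 volume := by
  have hK : 0 < ‖k‖ := norm_pos_iff.2 hk
  set δ := ν ^ (1 / 3 : ℝ) * ‖k‖ ^ (2 / 3 : ℝ) with hδ
  have hδ_pos : 0 < δ := by positivity
  have hδ_cube : δ ^ 3 = ν * ‖k‖ ^ 2 := by
    rw [hδ, mul_pow, ← rpow_mul_natCast hν.le, ← rpow_mul_natCast hK.le]
    norm_num
  have hδ_inv : ν ^ (-(1 : ℝ) / 3) * ‖k‖ ^ (-(2 : ℝ) / 3) = δ⁻¹ := by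
    rw [hδ, mul_inv, neg_div, neg_div, rpow_neg hν.le, rpow_neg hK.le]
  have bound : ‖h.toLp 2‖ ≤ 9 / 2 * δ⁻¹ * ‖g.toLp 2‖ := by
    rw [mul_right_comm, ← div_eq_mul_inv, le_div_iff₀' hδ_pos]
    exact mul_norm_toLp_le_of_resolvent_eq hε hδ_pos hδ_cube heq
  rw [SchwartzMap.norm_toLp, SchwartzMap.norm_toLp] at bound
  rw [mul_assoc (9 / 2), hδ_inv, ← ENNReal.ofReal_toReal (h.memLp 2 volume).eLpNorm_ne_top,
    ← ENNReal.ofReal_toReal (g.memLp 2 volume).eLpNorm_ne_top, ← ENNReal.ofReal_mul (by positivity)]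
  exact ENNReal.ofReal_le_ofReal bound

end Resolvent

theorem lapC_eq_laplacian {d : ℕ} (h : 𝓢(EuclideanSpace ℝ (Fin d), ℂ))
    (v : EuclideanSpace ℝ (Fin d)) : lapC (fun w ↦ h w) v = Δ h v := by
  rw [SchwartzMap.laplacian_eq_sum (EuclideanSpace.basisFun (Fin d) ℝ), sum_apply]
  simp only [lapC, SchwartzMap.lineDerivOp_apply_eq_fderiv, EuclideanSpace.basisFun_apply]
  rfl

/-- Airy-type hypoelliptic resolvent estimate for the transport operator `i k·v − ν Δ`:
`‖h‖_{L²} ≤ C ν^{-1/3} |k|^{-2/3} ‖g‖_{L²}`. -/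
theorem stmt0 (d : ℕ) (hd : 1 ≤ d) :
    ∃ C : ℝ, 0 < C ∧
      ∀ (ν ε : ℝ), 0 < ν → 0 < ε →
      ∀ k : EuclideanSpace ℝ (Fin d), k ≠ 0 →
      ∀ g h : SchwartzMap (EuclideanSpace ℝ (Fin d)) ℂ,
        (∀ v, (ε : ℂ) * h v + Complex.I * ((⟪k, v⟫ : ℝ) : ℂ) * h v
            - (ν : ℂ) * lapC (fun w => h w) v = g v) →
        eLpNorm (fun v => h v) 2 volume
          ≤ ENNReal.ofReal (C * ν ^ (-(1 : ℝ) / 3) * ‖k‖ ^ (-(2 : ℝ) / 3)) *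
            eLpNorm (fun v => g v) 2 volume := by
  exact ⟨9 / 2, by norm_num, fun ν ε hν hε k hk g h heq ↦ stmt0_general hν hε.le hk fun v ↦ by
    simpa [lapC_eq_laplacian] using heq v⟩
end

section
/- There exists an absolute constant C > 0 such that for every η > 0 and all Schwartz functions g, h : ℝ → ℂ satisfying η·h(z) + i·z·h(z) − h''(z) = g(z) for all z ∈ ℝ, one has ‖h‖_{L²(ℝ)} ≤ C·‖g‖_{L²(ℝ)}. In other words, the resolvent of the complex Airy operator i z − d²/dz² on L²(ℝ) is bounded uniformly with respect to the spectral parameter η ranging over the positive reals. -/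
open MeasureTheory
open scoped ENNReal

/-!
The Fourier transform turns the resolvent equation `ζ h + i z h - h'' = g` into the first-order
equation `u' = 2π ((ζ + (2πξ)²) u - f)` for `u = 𝓕 h` and `f = 𝓕 g`. The imaginary part of the
coefficient does not affect `‖u‖²`, and its real part is large away from `ξ = 0`. A bounded weight
`exp Φ` with `Φ` a multiple of `arctan (2πξ)` grows fast enough near `ξ = 0` to compensate there for
a small or negative `Re ζ`, so integrating the derivative of `exp Φ * ‖u‖²` over `ℝ` bounds `u` by
`f` in `L²`, uniformly over the half-plane `μ ≤ Re ζ`. Plancherel's theorem returns the bound to `h`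
and `g`.
-/

open Real LineDeriv
open scoped SchwartzMap FourierTransform RealInnerProductSpace

section EnergyEstimate

variable {E : Type*} [NormedAddCommGroup E] [InnerProductSpace ℝ E]
  {u f : ℝ → E} {Φ : ℝ → ℝ} {δ K L : ℝ}

theorem integrable_real_inner_of_memLp_two {α : Type*} [MeasurableSpace α] {ν : Measure α}
    {v w : α → E} (hv : MemLp v 2 ν) (hw : MemLp w 2 ν) : Integrable (fun x ↦ ⟪v x, w x⟫) ν :=
  memLp_one_iff_integrable.1 ((innerSL ℝ).memLp_of_bilin 1 hv hw)

theorem integrable_exp_mul_of_abs_le (hΦ : Differentiable ℝ Φ) (hK : ∀ x, |Φ x| ≤ K)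
    {v : ℝ → ℝ} (hv : Integrable v) : Integrable fun x ↦ exp (Φ x) * v x :=
  hv.bdd_mul (c := exp K) hΦ.continuous.rexp.aestronglyMeasurable <| .of_forall fun x ↦ by
    simpa only [norm_eq_abs, abs_exp, exp_le_exp] using (le_abs_self _).trans (hK x)

theorem two_mul_real_inner_le_mul_norm_sq_add (hδ : 0 < δ) (v w : E) :
    2 * ⟪v, w⟫ ≤ δ * ‖v‖ ^ 2 + δ⁻¹ * ‖w‖ ^ 2 := by
  linarith [real_inner_le_norm v w, two_mul_le_add_mul_sq (a := ‖v‖) (b := ‖w‖) hδ]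

theorem integral_exp_mul_norm_sq_le (hδ : 0 < δ)
    (hΦ : Differentiable ℝ Φ) (hK : ∀ x, |Φ x| ≤ K) (hL : ∀ x, |deriv Φ x| ≤ L)
    (hu : Differentiable ℝ u) (hu₂ : MemLp u 2) (hu'₂ : MemLp (deriv u) 2) (hf₂ : MemLp f 2)
    (h : ∀ x, 2 * δ * ‖u x‖ ^ 2 ≤ deriv Φ x * ‖u x‖ ^ 2 + 2 * ⟪u x, deriv u x + f x⟫) :
    δ ^ 2 * ∫ x, exp (Φ x) * ‖u x‖ ^ 2 ≤ ∫ x, exp (Φ x) * ‖f x‖ ^ 2 := by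
  have int_u : Integrable fun x ↦ ‖u x‖ ^ 2 := hu₂.norm.integrable_sq
  have int_wu := integrable_exp_mul_of_abs_le hΦ hK int_u
  have int_wf := integrable_exp_mul_of_abs_le hΦ hK hf₂.norm.integrable_sq
  have int_deriv : Integrable fun x ↦
      exp (Φ x) * (deriv Φ x * ‖u x‖ ^ 2 + 2 * ⟪u x, deriv u x⟫) :=
    integrable_exp_mul_of_abs_le hΦ hK <|
      (int_u.bdd_mul (measurable_deriv Φ).aestronglyMeasurable (.of_forall hL)).add
        ((integrable_real_inner_of_memLp_two hu₂ hu'₂).const_mul 2)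
  have hasDerivAt_energy (x : ℝ) : HasDerivAt (fun x ↦ exp (Φ x) * ‖u x‖ ^ 2)
      (exp (Φ x) * (deriv Φ x * ‖u x‖ ^ 2 + 2 * ⟪u x, deriv u x⟫)) x :=
    ((hΦ x).hasDerivAt.exp.mul (hu x).hasDerivAt.norm_sq).congr_deriv (by ring)
  have pointwise (x : ℝ) : δ * (exp (Φ x) * ‖u x‖ ^ 2) - δ⁻¹ * (exp (Φ x) * ‖f x‖ ^ 2) ≤
      exp (Φ x) * (deriv Φ x * ‖u x‖ ^ 2 + 2 * ⟪u x, deriv u x⟫) := by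
    have young := two_mul_real_inner_le_mul_norm_sq_add hδ (u x) (f x)
    have coercive := h x
    rw [inner_add_right] at coercive
    calc _ = exp (Φ x) * (δ * ‖u x‖ ^ 2 - δ⁻¹ * ‖f x‖ ^ 2) := by ring
      _ ≤ _ := by
        gcongr
        linarith
  have key : δ * (∫ x, exp (Φ x) * ‖u x‖ ^ 2) - δ⁻¹ * ∫ x, exp (Φ x) * ‖f x‖ ^ 2 ≤ 0 := calc
    _ = ∫ x, δ * (exp (Φ x) * ‖u x‖ ^ 2) - δ⁻¹ * (exp (Φ x) * ‖f x‖ ^ 2) := by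
      rw [integral_sub (int_wu.const_mul δ) (int_wf.const_mul δ⁻¹), integral_const_mul,
        integral_const_mul]
    _ ≤ ∫ x, exp (Φ x) * (deriv Φ x * ‖u x‖ ^ 2 + 2 * ⟪u x, deriv u x⟫) :=
      integral_mono ((int_wu.const_mul δ).sub (int_wf.const_mul δ⁻¹)) int_deriv pointwise
    _ = 0 := integral_eq_zero_of_hasDerivAt_of_integrable hasDerivAt_energy int_deriv int_wu
  have := mul_nonpos_of_nonneg_of_nonpos hδ.le key
  rw [mul_sub, mul_inv_cancel_left₀ hδ.ne'] at this
  linarith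

theorem integral_norm_sq_le_of_le_deriv_add_inner (hδ : 0 < δ)
    (hΦ : Differentiable ℝ Φ) (hK : ∀ x, |Φ x| ≤ K) (hL : ∀ x, |deriv Φ x| ≤ L)
    (hu : Differentiable ℝ u) (hu₂ : MemLp u 2) (hu'₂ : MemLp (deriv u) 2) (hf₂ : MemLp f 2)
    (h : ∀ x, 2 * δ * ‖u x‖ ^ 2 ≤ deriv Φ x * ‖u x‖ ^ 2 + 2 * ⟪u x, deriv u x + f x⟫) :
    ∫ x, ‖u x‖ ^ 2 ≤ (exp K / δ) ^ 2 * ∫ x, ‖f x‖ ^ 2 := by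
  have int_u := hu₂.norm.integrable_sq
  have int_f := hf₂.norm.integrable_sq
  have lower : exp (-K) * ∫ x, ‖u x‖ ^ 2 ≤ ∫ x, exp (Φ x) * ‖u x‖ ^ 2 := by
    rw [← integral_const_mul]
    refine integral_mono (int_u.const_mul _) (integrable_exp_mul_of_abs_le hΦ hK int_u) fun x ↦ ?_
    have := (abs_le.1 (hK x)).1
    dsimp only
    gcongr
  have upper : ∫ x, exp (Φ x) * ‖f x‖ ^ 2 ≤ exp K * ∫ x, ‖f x‖ ^ 2 := by
    rw [← integral_const_mul]
    refine integral_mono (integrable_exp_mul_of_abs_le hΦ hK int_f) (int_f.const_mul _) fun x ↦ ?_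
    have := (abs_le.1 (hK x)).2
    dsimp only
    gcongr
  have weighted := integral_exp_mul_norm_sq_le hδ hΦ hK hL hu hu₂ hu'₂ hf₂ h
  calc ∫ x, ‖u x‖ ^ 2
      = exp K / δ ^ 2 * (δ ^ 2 * (exp (-K) * ∫ x, ‖u x‖ ^ 2)) := by
        rw [exp_neg]
        field_simp
    _ ≤ exp K / δ ^ 2 * (exp K * ∫ x, ‖f x‖ ^ 2) := by
        refine mul_le_mul_of_nonneg_left ?_ (by positivity)
        exact (mul_le_mul_of_nonneg_left lower (sq_nonneg δ)).trans (weighted.trans upper)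
    _ = (exp K / δ) ^ 2 * ∫ x, ‖f x‖ ^ 2 := by ring

end EnergyEstimate

theorem eLpNorm_two_le_of_integral_norm_sq_le {α E F : Type*} [MeasurableSpace α] {ν : Measure α}
    [NormedAddCommGroup E] [NormedAddCommGroup F] {f : α → E} {g : α → F} {C : ℝ} (hC : 0 ≤ C)
    (hf : MemLp f 2 ν) (hg : MemLp g 2 ν)
    (h : ∫ x, ‖f x‖ ^ 2 ∂ν ≤ C ^ 2 * ∫ x, ‖g x‖ ^ 2 ∂ν) :
    eLpNorm f 2 ν ≤ ENNReal.ofReal C * eLpNorm g 2 ν := by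
  rw [hf.eLpNorm_eq_integral_rpow_norm two_ne_zero ENNReal.ofNat_ne_top,
    hg.eLpNorm_eq_integral_rpow_norm two_ne_zero ENNReal.ofNat_ne_top, ← ENNReal.ofReal_mul hC]
  refine ENNReal.ofReal_le_ofReal ?_
  simpa only [ENNReal.toReal_ofNat, rpow_ofNat, ← one_div, ← sqrt_eq_rpow,
    sqrt_mul (sq_nonneg C), sqrt_sq hC] using sqrt_le_sqrt h

section ComplexAiry

variable {E : Type*} [NormedAddCommGroup E]

/-- The complex Airy operator `h ↦ i z h - h''` of `stmt2`, acting on Schwartz functions. -/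
noncomputable def complexAiry [NormedSpace ℂ E] (h : 𝓢(ℝ, E)) : 𝓢(ℝ, E) :=
  Complex.I • SchwartzMap.smulLeftCLM E (fun z : ℝ ↦ z) h - ∂_{(1 : ℝ)} (∂_{(1 : ℝ)} h)

theorem lineDerivOp_one_apply [NormedSpace ℝ E] (h : 𝓢(ℝ, E)) (x : ℝ) :
    (∂_{(1 : ℝ)} h : 𝓢(ℝ, E)) x = deriv h x :=
  fderiv_apply_one_eq_deriv

theorem complexAiry_apply [NormedSpace ℂ E] (h : 𝓢(ℝ, E)) (z : ℝ) :
    complexAiry h z = (Complex.I * z) • h z - deriv (deriv h) z := by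
  have deriv_eq : ⇑(∂_{(1 : ℝ)} h : 𝓢(ℝ, E)) = deriv h := funext (lineDerivOp_one_apply h)
  simp only [complexAiry, sub_apply, smul_apply, lineDerivOp_one_apply, deriv_eq,
    SchwartzMap.smulLeftCLM_apply_apply .id', mul_smul, Complex.coe_smul]

theorem fourier_complexAiry_apply [NormedSpace ℂ E] (h : 𝓢(ℝ, E)) (ξ : ℝ) :
    𝓕 (complexAiry h) ξ =
      (2 * π * ξ) ^ 2 • 𝓕 h ξ - (2 * π)⁻¹ • deriv (𝓕 h : 𝓢(ℝ, E)) ξ := by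
  have inner_one : (inner ℝ · (1 : ℝ)) = fun x : ℝ ↦ x := by ext; simp
  have fourier_mul : 𝓕 (Complex.I • SchwartzMap.smulLeftCLM E (fun z : ℝ ↦ z) h) =
      -(2 * π : ℂ)⁻¹ • ∂_{(1 : ℝ)} (𝓕 h) := by
    rw [SchwartzMap.lineDerivOp_fourier_eq, inner_one]
    simp only [FourierTransform.fourier_smul, smul_smul]
    congr 1
    have : (π : ℂ) ≠ 0 := by exact_mod_cast pi_ne_zero
    field_simp
  have fourier_deriv₂ : 𝓕 (∂_{(1 : ℝ)} (∂_{(1 : ℝ)} h)) ξ = -(2 * π * ξ) ^ 2 • 𝓕 h ξ := by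
    simp only [SchwartzMap.fourier_lineDerivOp_eq, inner_one, smul_apply,
      SchwartzMap.smulLeftCLM_apply_apply .id', ← Complex.coe_smul, smul_smul]
    congr 1
    push_cast
    linear_combination 4 * (π : ℂ) ^ 2 * ξ ^ 2 * Complex.I_sq
  rw [complexAiry, sub_eq_add_neg, FourierTransform.fourier_add, FourierTransform.fourier_neg,
    add_apply, neg_apply, fourier_mul, fourier_deriv₂, smul_apply, lineDerivOp_one_apply,
    ← Complex.coe_smul (2 * π)⁻¹]
  push_cast
  module

theorem deriv_fourier_add_fourier_smul_add_complexAiry [NormedSpace ℂ E] (ζ : ℂ) (h : 𝓢(ℝ, E))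
    (ξ : ℝ) :
    deriv (𝓕 h : 𝓢(ℝ, E)) ξ + (2 * π) • 𝓕 (ζ • h + complexAiry h) ξ =
      (2 * π) • (ζ + ((2 * π * ξ) ^ 2 : ℝ)) • 𝓕 h ξ := by
  rw [FourierTransform.fourier_add, FourierTransform.fourier_smul, add_apply, smul_apply,
    fourier_complexAiry_apply, add_smul, Complex.coe_smul, smul_add, smul_add, smul_sub,
    smul_inv_smul₀ two_pi_pos.ne']
  abel

/-- The exponent of the weight in the energy estimate for the Fourier transform of
`ζ • h + complexAiry h` when `μ ≤ ζ.re`. The factor `(2 - μ) ^ 2 / 2` makes the AM-GM inequality in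
`two_mul_two_pi_le_deriv_airyWeight_add` give exactly the lower bound `2 * (2 * π)`. -/
noncomputable def airyWeight (μ ξ : ℝ) : ℝ := (2 - μ) ^ 2 / 2 * arctan (2 * π * ξ)

theorem hasDerivAt_airyWeight (μ ξ : ℝ) :
    HasDerivAt (airyWeight μ) (2 * π * ((2 - μ) ^ 2 / (2 * (1 + (2 * π * ξ) ^ 2)))) ξ :=
  (((hasDerivAt_id ξ).const_mul (2 * π)).arctan.const_mul ((2 - μ) ^ 2 / 2)).congr_deriv <| by
    simp only [id_eq]
    field_simp

theorem abs_airyWeight_le (μ ξ : ℝ) : |airyWeight μ ξ| ≤ π * (2 - μ) ^ 2 / 4 := calc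
  |airyWeight μ ξ| = (2 - μ) ^ 2 / 2 * |arctan (2 * π * ξ)| := by
    rw [airyWeight, abs_mul, abs_of_nonneg (by positivity)]
  _ ≤ (2 - μ) ^ 2 / 2 * (π / 2) := by
    gcongr
    exact abs_le.2 ⟨(neg_pi_div_two_lt_arctan _).le, (arctan_lt_pi_div_two _).le⟩
  _ = π * (2 - μ) ^ 2 / 4 := by ring

theorem abs_deriv_airyWeight_le (μ ξ : ℝ) : |deriv (airyWeight μ) ξ| ≤ 2 * π * (2 - μ) ^ 2 := by
  rw [(hasDerivAt_airyWeight μ ξ).deriv, abs_of_nonneg (by positivity)]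
  gcongr
  exact div_le_self (sq_nonneg _) (by nlinarith)

theorem two_mul_two_pi_le_deriv_airyWeight_add (μ ξ : ℝ) :
    2 * (2 * π) ≤ deriv (airyWeight μ) ξ + 2 * (2 * π * (μ + (2 * π * ξ) ^ 2)) := by
  rw [(hasDerivAt_airyWeight μ ξ).deriv]
  set t := 1 + (2 * π * ξ) ^ 2 with ht
  have amgm : 2 * (2 - μ) ≤ 2 * t + (2 - μ) ^ 2 / (2 * t) := by
    have := two_mul_le_add_mul_sq (a := 1) (b := 2 - μ) (ε := 2 * t) (by positivity)
    rwa [mul_one, one_pow, mul_one, inv_mul_eq_div] at this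
  calc 2 * (2 * π) = 2 * π * (2 * (2 - μ) + 2 * (μ - 1)) := by ring
    _ ≤ 2 * π * (2 * t + (2 - μ) ^ 2 / (2 * t) + 2 * (μ - 1)) := by gcongr
    _ = _ := by rw [ht]; ring

variable [InnerProductSpace ℂ E] [CompleteSpace E]

theorem integral_norm_sq_le_integral_norm_sq_smul_add_complexAiry {μ : ℝ} {ζ : ℂ}
    (hμ : μ ≤ ζ.re) (h : 𝓢(ℝ, E)) :
    ∫ z, ‖h z‖ ^ 2 ≤
      exp (π * (2 - μ) ^ 2 / 4) ^ 2 * ∫ z, ‖(ζ • h + complexAiry h) z‖ ^ 2 := by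
  let : InnerProductSpace ℝ E := .complexToReal
  have coercive (ξ : ℝ) : 2 * (2 * π) * ‖𝓕 h ξ‖ ^ 2 ≤ deriv (airyWeight μ) ξ * ‖𝓕 h ξ‖ ^ 2 +
      2 * ⟪𝓕 h ξ, deriv (𝓕 h : 𝓢(ℝ, E)) ξ + (2 * π) • 𝓕 (ζ • h + complexAiry h) ξ⟫ := by
    have inner_smul_self : ⟪𝓕 h ξ, (ζ + ((2 * π * ξ) ^ 2 : ℝ)) • 𝓕 h ξ⟫ =
        (ζ.re + (2 * π * ξ) ^ 2) * ‖𝓕 h ξ‖ ^ 2 := by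
      rw [real_inner_eq_re_inner ℂ, inner_smul_right, inner_self_eq_norm_sq_to_K]
      norm_cast
      rw [mul_comm, RCLike.re_ofReal_mul, RCLike.re_to_complex, Complex.add_re, Complex.ofReal_re,
        mul_comm]
    rw [deriv_fourier_add_fourier_smul_add_complexAiry, real_inner_smul_right, inner_smul_self]
    calc 2 * (2 * π) * ‖𝓕 h ξ‖ ^ 2
        ≤ (deriv (airyWeight μ) ξ + 2 * (2 * π * (ζ.re + (2 * π * ξ) ^ 2))) * ‖𝓕 h ξ‖ ^ 2 := by
          gcongr
          exact (two_mul_two_pi_le_deriv_airyWeight_add μ ξ).trans (by gcongr)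
      _ = _ := by ring
  have deriv_memLp : MemLp (deriv (𝓕 h : 𝓢(ℝ, E))) 2 :=
    (SchwartzMap.derivCLM ℂ E (𝓕 h)).memLp 2 volume
  have energy := integral_norm_sq_le_of_le_deriv_add_inner two_pi_pos
    (fun ξ ↦ (hasDerivAt_airyWeight μ ξ).differentiableAt) (abs_airyWeight_le μ)
    (abs_deriv_airyWeight_le μ) (𝓕 h).differentiable ((𝓕 h).memLp 2)
    deriv_memLp (((𝓕 (ζ • h + complexAiry h)).memLp 2).const_smul (2 * π)) coercive
  simp only [norm_smul, mul_pow, integral_const_mul,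
    SchwartzMap.integral_norm_sq_fourier] at energy
  rwa [norm_of_nonneg two_pi_pos.le, ← mul_assoc, ← mul_pow,
    div_mul_cancel₀ _ two_pi_pos.ne'] at energy

end ComplexAiry

theorem stmt2_general {E : Type*} [NormedAddCommGroup E] [InnerProductSpace ℂ E] [CompleteSpace E]
    (μ : ℝ) :
    ∃ C : ℝ, 0 < C ∧
      ∀ ζ : ℂ, μ ≤ ζ.re →
      ∀ g h : 𝓢(ℝ, E),
        (∀ z : ℝ, ζ • h z + (Complex.I * z) • h z - deriv (deriv h) z = g z) →
        eLpNorm h 2 volume ≤ ENNReal.ofReal C * eLpNorm g 2 volume := by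
  refine ⟨exp (π * (2 - μ) ^ 2 / 4), exp_pos _, fun ζ hζ g h hg ↦ ?_⟩
  obtain rfl : ζ • h + complexAiry h = g := by
    ext z
    rw [add_apply, smul_apply, complexAiry_apply, ← hg, add_sub_assoc]
  exact eLpNorm_two_le_of_integral_norm_sq_le (exp_nonneg _) (h.memLp 2)
    ((ζ • h + complexAiry h).memLp 2)
    (integral_norm_sq_le_integral_norm_sq_smul_add_complexAiry hζ h)

/-- Uniform resolvent bound for the complex Airy operator `i z − d²/dz²` on `L²(ℝ)`:
if `η h + i z h − h'' = g` with `η > 0`, then `‖h‖_{L²} ≤ C ‖g‖_{L²}` for an absolute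
constant `C`. -/
theorem stmt2 :
    ∃ C : ℝ, 0 < C ∧
      ∀ η : ℝ, 0 < η →
      ∀ g h : SchwartzMap ℝ ℂ,
        (∀ z : ℝ, (η : ℂ) * h z + Complex.I * (z : ℂ) * h z
            - deriv (deriv fun x : ℝ => h x) z = g z) →
        eLpNorm (fun z => h z) 2 volume ≤ ENNReal.ofReal C * eLpNorm (fun z => g z) 2 volume := by
  obtain ⟨C, hC, bound⟩ := stmt2_general (E := ℂ) 0
  exact ⟨C, hC, fun η hη ↦ bound η hη.le⟩
end

section
/- Fix a dimension d ≥ 1. There exists a constant C = C(d) > 0 such that for all compactly supported smooth functions g, h : ℝ^d → ℂ, all k ∈ ℝ^d with k ≠ 0, and all ε > 0, one has | ∫_{ℝ^d} conj(h(v)) · g(v) / (ε + i k·v) dv | ≤ (C/|k|) · ( (‖h‖_{L²} + ‖∇h‖_{L²}) ‖g‖_{L²} + ‖h‖_{L²} ‖∇g‖_{L²} ). -/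
open MeasureTheory
open scoped ENNReal RealInnerProductSpace

/-
Write `x = k·v` and `F = ⟨h, g⟩`. The resolvent kernel `1 / (ε + i x)` is the even Poisson kernel
`ε / (ε² + x²)` minus `i` times the odd conjugate kernel `x / (ε² + x²)`. The Poisson kernel is the
derivative of `arctan (x / ε)`, which is bounded by `π / 2` for every `ε`, so integrating by parts
along `k` bounds its contribution by `π / 2` times the `L¹` norm of `∇F / |k|`. The odd kernel is at
most `1 / |x|` and sees only `F - F ∘ R`, where `R` is the reflection in the hyperplane orthogonal
to `k`. By bilinearity this difference reduces to `h - h ∘ R` and `g - g ∘ R`, each bounded by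
`|x| / |k|` times the integral of its gradient over the dilations along `k` by factors in `[-1, 1]`;
the factor `|x|` cancels the singularity, and the integrals obey a Hardy type inequality.
-/

open scoped Real

theorem lintegral_Icc_abs_inv_rpow {r : ℝ} (hr : r < 1) :
    ∫⁻ t in Set.Icc (-1 : ℝ) 1, ENNReal.ofReal |t⁻¹| ^ r = ENNReal.ofReal (2 / (1 - r)) := by
  have hpos : ∫⁻ t in Set.Ioc (0 : ℝ) 1, ENNReal.ofReal |t⁻¹| ^ r =
      ENNReal.ofReal (1 / (1 - r)) := by
    have hint : IntegrableOn (fun t : ℝ => t ^ (-r)) (Set.Ioc 0 1) :=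
      (intervalIntegrable_iff_integrableOn_Ioc_of_le zero_le_one).1
        (intervalIntegral.intervalIntegrable_rpow' (by linarith))
    have hval : ∫ t in Set.Ioc (0 : ℝ) 1, t ^ (-r) = 1 / (1 - r) := by
      rw [← intervalIntegral.integral_of_le zero_le_one, integral_rpow (Or.inl (by linarith)),
        Real.one_rpow, Real.zero_rpow (by linarith), sub_zero, neg_add_eq_sub]
    rw [← hval, ofReal_integral_eq_lintegral_ofReal hint
      (ae_restrict_of_forall_mem measurableSet_Ioc fun t ht => Real.rpow_nonneg ht.1.le _)]
    refine setLIntegral_congr_fun measurableSet_Ioc fun t ht => ?_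
    have ht' : 0 < t⁻¹ := inv_pos.2 ht.1
    simp only [abs_of_pos ht', ENNReal.ofReal_rpow_of_pos ht', Real.rpow_neg_eq_inv_rpow]
  have hneg : ∫⁻ t in Set.Ico (-1 : ℝ) 0, ENNReal.ofReal |t⁻¹| ^ r =
      ENNReal.ofReal (1 / (1 - r)) := by
    rw [← hpos, ← (Measure.measurePreserving_neg (volume : Measure ℝ)).setLIntegral_comp_preimage
      measurableSet_Ioc (by fun_prop)]
    simp
  have hsplit : Set.Icc (-1 : ℝ) 1 =ᵐ[volume] (Set.Ico (-1) 0 ∪ Set.Ioc 0 1 : Set ℝ) := by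
    rw [← Set.Icc_union_Icc_eq_Icc (b := 0) (by norm_num) (by norm_num)]
    exact Ico_ae_eq_Icc.symm.union Ioc_ae_eq_Icc.symm
  have hdisj : Disjoint (Set.Ico (-1 : ℝ) 0) (Set.Ioc 0 1) :=
    Set.disjoint_left.2 fun t ht ht' => ht.2.not_gt ht'.1
  rw [setLIntegral_congr hsplit, lintegral_union measurableSet_Ioc hdisj, hneg, hpos,
    ← ENNReal.ofReal_add (by bound) (by bound), ← add_div, one_add_one_eq_two]

theorem toReal_inv_add_inv_toReal (p q : ℝ≥0∞) [p.HolderConjugate q] :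
    p⁻¹.toReal + q.toReal⁻¹ = 1 := by
  rw [← ENNReal.toReal_inv, ← ENNReal.toReal_add
    (ENNReal.inv_ne_top.2 (ENNReal.HolderConjugate.ne_zero p q))
    (ENNReal.inv_ne_top.2 (ENNReal.HolderConjugate.ne_zero q p)),
    ENNReal.HolderConjugate.inv_add_inv_eq_one p q, ENNReal.toReal_one]

theorem lintegral_enorm_mul_le_eLpNorm_mul_eLpNorm {α G H : Type*} [MeasurableSpace α]
    {μ : Measure α} [NormedAddCommGroup G] [NormedAddCommGroup H] {u : α → G} {w : α → H}
    (hu : AEStronglyMeasurable u μ) (hw : AEStronglyMeasurable w μ)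
    (p q : ℝ≥0∞) [p.HolderConjugate q] :
    ∫⁻ x, ‖u x‖ₑ * ‖w x‖ₑ ∂μ ≤ eLpNorm u p μ * eLpNorm w q μ := by
  have := eLpNorm_le_eLpNorm_mul_eLpNorm_of_nnnorm (p := p) (q := q) (r := 1) hu hw
    (fun x y => ‖x‖ * ‖y‖) 1 (.of_forall fun x => by simp [nnnorm_mul])
  simpa [eLpNorm_one_eq_lintegral_enorm] using this

theorem integrable_inner_of_memLp {α 𝕜 V : Type*} [MeasurableSpace α] {μ : Measure α} [RCLike 𝕜]
    [NormedAddCommGroup V] [InnerProductSpace 𝕜 V] {p q : ℝ≥0∞} [p.HolderConjugate q]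
    {g h : α → V} (hh : MemLp h p μ) (hg : MemLp g q μ) :
    Integrable (fun x => inner 𝕜 (h x) (g x)) μ :=
  memLp_one_iff_integrable.1 <| hh.of_bilin (inner 𝕜) 1 hg
    (hh.aestronglyMeasurable.inner hg.aestronglyMeasurable)
    (.of_forall fun x => by simpa only [one_mul] using nnnorm_inner_le_nnnorm (h x) (g x))

section InnerProductSpace

variable {E : Type*} [NormedAddCommGroup E] [InnerProductSpace ℝ E]

/-- The dilation by the factor `t` along the line `ℝ k`, fixing the hyperplane orthogonal to `k`. As
`t` runs through `[-1, 1]`, it joins the reflection in that hyperplane to the identity by linear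
maps of determinant `t`. The junk value for `k = 0` is the identity. -/
noncomputable def dilationAlong (k : E) (t : ℝ) : E →ₗ[ℝ] E :=
  LinearMap.transvection (innerₛₗ ℝ k) (((t - 1) / ‖k‖ ^ 2) • k)

namespace dilationAlong

variable (k : E) (t : ℝ) (v : E)

theorem apply : dilationAlong k t v = v + ((t - 1) * (⟪k, v⟫ / ‖k‖ ^ 2)) • k := by
  simp only [dilationAlong, LinearMap.transvection.apply, innerₛₗ_apply_apply, smul_smul]
  congr 2
  ring

theorem one_apply : dilationAlong k 1 v = v := by
  simp [apply]

theorem inner_apply : ⟪k, dilationAlong k t v⟫ = t * ⟪k, v⟫ := by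
  rcases eq_or_ne k 0 with rfl | hk
  · simp
  · have : ‖k‖ ≠ 0 := norm_ne_zero_iff.2 hk
    rw [apply, inner_add_right, inner_smul_right, real_inner_self_eq_norm_sq]
    field_simp
    ring

theorem continuous_uncurry : Continuous fun x : E × ℝ => dilationAlong k x.2 x.1 := by
  simp only [apply]
  fun_prop

theorem hasDerivAt : HasDerivAt (fun s => dilationAlong k s v) ((⟪k, v⟫ / ‖k‖ ^ 2) • k) t := by
  simp only [apply]
  have hcoeff := ((hasDerivAt_id' t).sub_const 1).mul_const (⟪k, v⟫ / ‖k‖ ^ 2)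
  simpa only [one_mul] using (hcoeff.smul_const k).const_add v

theorem continuous : Continuous (dilationAlong k t) :=
  (continuous_uncurry k).comp (continuous_id.prodMk continuous_const)

variable {k}

theorem det (hk : k ≠ 0) [FiniteDimensional ℝ E] : LinearMap.det (dilationAlong k t) = t := by
  have : ‖k‖ ≠ 0 := norm_ne_zero_iff.2 hk
  simp only [dilationAlong, LinearMap.transvection.det, innerₛₗ_apply_apply, inner_smul_right,
    real_inner_self_eq_norm_sq]
  field_simp
  ring

variable {t} [FiniteDimensional ℝ E] [MeasurableSpace E] [BorelSpace E]
  (μ : Measure E) [μ.IsAddHaarMeasure]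

theorem map_addHaar (hk : k ≠ 0) (ht : t ≠ 0) :
    μ.map (dilationAlong k t) = ENNReal.ofReal |t⁻¹| • μ := by
  rw [Measure.map_linearMap_addHaar_eq_smul_addHaar μ (by rwa [det t hk]), det t hk]

theorem measurePreserving_neg_one (hk : k ≠ 0) : MeasurePreserving (dilationAlong k (-1)) μ μ :=
  ⟨(continuous k _).measurable, by simp [map_addHaar μ hk (neg_ne_zero.2 one_ne_zero)]⟩

theorem eLpNorm_comp {G : Type*} [NormedAddCommGroup G] {u : E → G} (hu : StronglyMeasurable u)
    (p : ℝ≥0∞) (hk : k ≠ 0) (ht : t ≠ 0) :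
    eLpNorm (u ∘ dilationAlong k t) p μ = ENNReal.ofReal |t⁻¹| ^ p⁻¹.toReal * eLpNorm u p μ := by
  have hc : ENNReal.ofReal |t⁻¹| ≠ 0 := by simpa using ht
  rw [← eLpNorm_map_measure hu.aestronglyMeasurable (continuous k t).aemeasurable,
    map_addHaar μ hk ht, eLpNorm_smul_measure_of_ne_zero hc, smul_eq_mul, one_div]

end dilationAlong

section Estimates

variable {G H : Type*} [NormedAddCommGroup G] [NormedAddCommGroup H]

theorem enorm_mul_enorm_sub_dilationAlong_neg_one_le [NormedSpace ℝ G] (k : E) {f : E → G}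
    (hf : ContDiff ℝ 1 f) (v : E) :
    ‖k‖ₑ * ‖f v - f (dilationAlong k (-1) v)‖ₑ ≤
      ‖⟪k, v⟫‖ₑ * ∫⁻ t in Set.Icc (-1 : ℝ) 1, ‖fderiv ℝ f (dilationAlong k t v)‖ₑ := by
  have hderiv (t : ℝ) : deriv (fun s => f (dilationAlong k s v)) t =
      fderiv ℝ f (dilationAlong k t v) ((⟪k, v⟫ / ‖k‖ ^ 2) • k) :=
    ((hf.differentiable one_ne_zero _).hasFDerivAt.comp_hasDerivAt t
      (dilationAlong.hasDerivAt k t v)).deriv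
  have hsmooth : ContDiff ℝ 1 fun s => f (dilationAlong k s v) := by
    simp only [dilationAlong.apply]
    fun_prop
  have hftc := enorm_sub_le_lintegral_deriv_of_contDiffOn_Icc hsmooth.contDiffOn
    (neg_le_self zero_le_one)
  have hspeed : ‖k‖ₑ * ‖(⟪k, v⟫ / ‖k‖ ^ 2) • k‖ₑ ≤ ‖⟪k, v⟫‖ₑ := by
    rcases eq_or_ne k 0 with rfl | hk
    · simp
    · have : ‖k‖ ≠ 0 := norm_ne_zero_iff.2 hk
      simp only [← enorm_norm k, ← enorm_norm (_ • _), ← enorm_mul]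
      rw [enorm_le_iff_norm_le]
      simp only [norm_smul, norm_mul, norm_norm, norm_div, norm_pow]
      apply le_of_eq
      field_simp
  rw [dilationAlong.one_apply] at hftc
  calc ‖k‖ₑ * ‖f v - f (dilationAlong k (-1) v)‖ₑ
      ≤ ∫⁻ t in Set.Icc (-1 : ℝ) 1, ‖k‖ₑ * ‖deriv (fun s => f (dilationAlong k s v)) t‖ₑ := by
        rw [lintegral_const_mul' _ _ enorm_ne_top]
        gcongr
    _ ≤ ∫⁻ t in Set.Icc (-1 : ℝ) 1, ‖⟪k, v⟫‖ₑ * ‖fderiv ℝ f (dilationAlong k t v)‖ₑ := by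
        refine lintegral_mono fun t => ?_
        rw [hderiv, mul_comm ‖⟪k, v⟫‖ₑ]
        grw [ContinuousLinearMap.le_opENorm, mul_left_comm, hspeed]
    _ = _ := lintegral_const_mul' _ _ enorm_ne_top

variable [MeasurableSpace E] [BorelSpace E]

theorem integrable_comp_inner_smul [NormedSpace ℝ G] {μ : Measure E} {φ : ℝ → ℝ} {C : ℝ} (k : E)
    (hφ : Continuous φ) (hC : ∀ x, |φ x| ≤ C) {F : E → G} (hF : Integrable F μ) :
    Integrable (fun v => φ ⟪k, v⟫ • F v) μ :=
  hF.bdd_smul C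
    (hφ.measurable.comp (by fun_prop : Continuous fun v => ⟪k, v⟫).measurable).aestronglyMeasurable
    (.of_forall fun v => hC ⟪k, v⟫)

variable [FiniteDimensional ℝ E] (μ : Measure E) [μ.IsAddHaarMeasure]

theorem lintegral_lintegral_dilationAlong_mul_le {u : E → G} {w : E → H}
    (hu : StronglyMeasurable u) (hw : StronglyMeasurable w) {k : E} (hk : k ≠ 0)
    (p : ℝ≥0∞) {q : ℝ≥0∞} [p.HolderConjugate q] (hq : q ≠ ∞) :
    ∫⁻ v, (∫⁻ t in Set.Icc (-1 : ℝ) 1, ‖u (dilationAlong k t v)‖ₑ) * ‖w v‖ₑ ∂μ ≤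
      2 * q * (eLpNorm u p μ * eLpNorm w q μ) := by
  have hexp : p⁻¹.toReal < 1 ∧ ENNReal.ofReal (2 / (1 - p⁻¹.toReal)) = 2 * q := by
    have hq' : 0 < q.toReal⁻¹ :=
      inv_pos.2 (ENNReal.toReal_pos (ENNReal.HolderConjugate.ne_zero q p) hq)
    have hadd : p⁻¹.toReal + q.toReal⁻¹ = 1 := toReal_inv_add_inv_toReal p q
    refine ⟨by linarith, ?_⟩
    rw [← hadd, add_sub_cancel_left, div_inv_eq_mul, ENNReal.ofReal_mul zero_le_two,
      ENNReal.ofReal_ofNat, ENNReal.ofReal_toReal hq]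
  have hmeas : Measurable fun x : E × ℝ => ‖u (dilationAlong k x.2 x.1)‖ₑ :=
    hu.enorm.comp (dilationAlong.continuous_uncurry k).measurable
  have hslice (t : ℝ) (ht : t ≠ 0) :
      ∫⁻ v, ‖u (dilationAlong k t v)‖ₑ * ‖w v‖ₑ ∂μ ≤
        ENNReal.ofReal |t⁻¹| ^ p⁻¹.toReal * (eLpNorm u p μ * eLpNorm w q μ) := by
    rw [← mul_assoc, ← dilationAlong.eLpNorm_comp μ hu p hk ht]
    exact lintegral_enorm_mul_le_eLpNorm_mul_eLpNorm
      (hu.comp_measurable (dilationAlong.continuous k t).measurable).aestronglyMeasurable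
      hw.aestronglyMeasurable p q
  -- By Hölder the slice at `t` costs a factor `|t| ^ (-1 / p)`, which is integrable since `1 < p`.
  calc ∫⁻ v, (∫⁻ t in Set.Icc (-1 : ℝ) 1, ‖u (dilationAlong k t v)‖ₑ) * ‖w v‖ₑ ∂μ
      = ∫⁻ v, (∫⁻ t in Set.Icc (-1 : ℝ) 1, ‖u (dilationAlong k t v)‖ₑ * ‖w v‖ₑ) ∂μ :=
        lintegral_congr fun v => (lintegral_mul_const _ (hmeas.comp measurable_prodMk_left)).symm
    _ = ∫⁻ t in Set.Icc (-1 : ℝ) 1, ∫⁻ v, ‖u (dilationAlong k t v)‖ₑ * ‖w v‖ₑ ∂μ :=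
        lintegral_lintegral_swap (hmeas.mul (hw.enorm.comp measurable_fst)).aemeasurable
    _ ≤ ∫⁻ t in Set.Icc (-1 : ℝ) 1,
          ENNReal.ofReal |t⁻¹| ^ p⁻¹.toReal * (eLpNorm u p μ * eLpNorm w q μ) := by
        refine lintegral_mono_ae (ae_restrict_of_ae ?_)
        filter_upwards [Measure.ae_ne volume (0 : ℝ)] with t ht using hslice t ht
    _ = 2 * q * (eLpNorm u p μ * eLpNorm w q μ) := by
        rw [lintegral_mul_const _ (by fun_prop), lintegral_Icc_abs_inv_rpow hexp.1, hexp.2]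

theorem two_mul_enorm_integral_odd_smul_le [NormedSpace ℝ G] {θ : ℝ → ℝ} (hθ : θ.Odd) {k : E}
    (hk : k ≠ 0) {F : E → G} (hF : Integrable (fun v => θ ⟪k, v⟫ • F v) μ) :
    2 * ‖∫ v, θ ⟪k, v⟫ • F v ∂μ‖ₑ ≤
      ∫⁻ v, ‖θ ⟪k, v⟫‖ₑ * ‖F v - F (dilationAlong k (-1) v)‖ₑ ∂μ := by
  let R := dilationAlong k (-1)
  have hR : MeasurePreserving R μ μ := dilationAlong.measurePreserving_neg_one μ hk
  have hflip (v : E) : θ ⟪k, R v⟫ • F (R v) = -(θ ⟪k, v⟫ • F (R v)) := by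
    rw [dilationAlong.inner_apply, neg_one_mul, hθ, neg_smul]
  have hint : Integrable (fun v => θ ⟪k, R v⟫ • F (R v)) μ := hR.integrable_comp_of_integrable hF
  have hRR : ∫ v, θ ⟪k, R v⟫ • F (R v) ∂μ = ∫ v, θ ⟪k, v⟫ • F v ∂μ := by
    rw [← integral_map hR.aemeasurable (f := fun v => θ ⟪k, v⟫ • F v)
      (by rw [hR.map_eq]; exact hF.aestronglyMeasurable), hR.map_eq]
  have hsum : (2 : ℝ) • ∫ v, θ ⟪k, v⟫ • F v ∂μ = ∫ v, θ ⟪k, v⟫ • (F v - F (R v)) ∂μ := by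
    rw [two_smul]
    nth_rw 2 [← hRR]
    rw [← integral_add hF hint]
    simp only [hflip, smul_sub, ← sub_eq_add_neg]
  calc 2 * ‖∫ v, θ ⟪k, v⟫ • F v ∂μ‖ₑ = ‖(2 : ℝ) • ∫ v, θ ⟪k, v⟫ • F v ∂μ‖ₑ := by
        rw [enorm_smul, Real.enorm_of_nonneg zero_le_two, ENNReal.ofReal_ofNat]
    _ ≤ ∫⁻ v, ‖θ ⟪k, v⟫ • (F v - F (R v))‖ₑ ∂μ := hsum ▸ enorm_integral_le_lintegral_enorm _
    _ = ∫⁻ v, ‖θ ⟪k, v⟫‖ₑ * ‖F v - F (R v)‖ₑ ∂μ := by simp only [enorm_smul]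

theorem enorm_mul_enorm_integral_deriv_comp_inner_smul_le [NormedSpace ℝ G] {A A' : ℝ → ℝ} {M : ℝ}
    (hA : ∀ x, HasDerivAt A (A' x) x) (hM : ∀ x, |A x| ≤ M) (k : E) {F : E → G}
    (hdF : Differentiable ℝ F) (hF : Integrable F μ) (hF' : Integrable (fderiv ℝ F) μ)
    (hAF : Integrable (fun v => A' ⟪k, v⟫ • F v) μ) :
    ‖k‖ₑ * ‖∫ v, A' ⟪k, v⟫ • F v ∂μ‖ₑ ≤ ENNReal.ofReal M * ∫⁻ v, ‖fderiv ℝ F v‖ₑ ∂μ := by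
  let e : E := ‖k‖⁻¹ • k
  have hke : ⟪k, e⟫ = ‖k‖ := by
    simp only [e, inner_smul_right, real_inner_self_eq_norm_mul_norm, ← mul_assoc, inv_mul_mul_self]
  have he : ‖e‖ ≤ 1 := by
    simp only [e, norm_smul, norm_inv, norm_norm, inv_mul_le_one]
  have hAk (v : E) : HasFDerivAt (fun v => A ⟪k, v⟫) (A' ⟪k, v⟫ • innerSL ℝ k) v :=
    (hA _).comp_hasFDerivAt v (innerSL ℝ k).hasFDerivAt
  have hAk' (v : E) : fderiv ℝ (fun v => A ⟪k, v⟫) v e = ‖k‖ * A' ⟪k, v⟫ := by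
    simp [(hAk v).fderiv, hke, mul_comm]
  have hAcont : Continuous A := continuous_iff_continuousAt.2 fun x => (hA x).continuousAt
  have hibp : ∫ v, A ⟪k, v⟫ • fderiv ℝ F v e ∂μ = -(‖k‖ • ∫ v, A' ⟪k, v⟫ • F v ∂μ) := by
    rw [integral_smul_fderiv_eq_neg_fderiv_smul_of_integrable]
    · simp only [hAk', mul_smul, integral_smul]
    · simpa only [hAk', mul_smul] using hAF.fun_smul ‖k‖
    · exact integrable_comp_inner_smul k hAcont hM (hF'.apply_continuousLinearMap e)
    · exact integrable_comp_inner_smul k hAcont hM hF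
    · exact fun v _ => (hAk v).differentiableAt
    · exact fun v _ => hdF v
  calc ‖k‖ₑ * ‖∫ v, A' ⟪k, v⟫ • F v ∂μ‖ₑ = ‖∫ v, A ⟪k, v⟫ • fderiv ℝ F v e ∂μ‖ₑ := by
        rw [hibp, enorm_neg, enorm_smul, enorm_norm]
    _ ≤ ∫⁻ v, ‖A ⟪k, v⟫ • fderiv ℝ F v e‖ₑ ∂μ := enorm_integral_le_lintegral_enorm _
    _ ≤ ∫⁻ v, ENNReal.ofReal M * ‖fderiv ℝ F v‖ₑ ∂μ := by
        refine lintegral_mono fun v => ?_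
        rw [enorm_smul]
        gcongr
        · rw [Real.enorm_eq_ofReal_abs]
          exact ENNReal.ofReal_le_ofReal (hM _)
        · exact enorm_le_iff_norm_le.2 ((fderiv ℝ F v).unit_le_opNorm e he)
    _ = ENNReal.ofReal M * ∫⁻ v, ‖fderiv ℝ F v‖ₑ ∂μ :=
        lintegral_const_mul' _ _ ENNReal.ofReal_ne_top

end Estimates

section Inner

variable {𝕜 V : Type*} [RCLike 𝕜] [NormedAddCommGroup V] [InnerProductSpace 𝕜 V]

theorem enorm_inner_le_enorm (x y : V) : ‖inner 𝕜 x y‖ₑ ≤ ‖x‖ₑ * ‖y‖ₑ := by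
  simpa only [enorm_eq_nnnorm, ← ENNReal.coe_mul, ENNReal.coe_le_coe] using
    nnnorm_inner_le_nnnorm x y

theorem enorm_inner_sub_inner_le (x x' y y' : V) :
    ‖inner 𝕜 x y - inner 𝕜 x' y'‖ₑ ≤ ‖x - x'‖ₑ * ‖y‖ₑ + ‖x'‖ₑ * ‖y - y'‖ₑ := by
  have hsplit : inner 𝕜 x y - inner 𝕜 x' y' = inner 𝕜 (x - x') y + inner 𝕜 x' (y - y') := by
    rw [inner_sub_left, inner_sub_right, sub_add_sub_cancel]
  grw [hsplit, enorm_add_le, enorm_inner_le_enorm, enorm_inner_le_enorm]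

variable [NormedSpace ℝ V]

theorem enorm_fderiv_inner_le {D : Type*} [NormedAddCommGroup D] [NormedSpace ℝ D] {h g : D → V}
    {v : D} (hh : DifferentiableAt ℝ h v) (hg : DifferentiableAt ℝ g v) :
    ‖fderiv ℝ (fun v => inner 𝕜 (h v) (g v)) v‖ₑ ≤
      ‖fderiv ℝ h v‖ₑ * ‖g v‖ₑ + ‖h v‖ₑ * ‖fderiv ℝ g v‖ₑ := by
  have hbound : ‖fderiv ℝ (fun v => inner 𝕜 (h v) (g v)) v‖ ≤
      ‖fderiv ℝ h v‖ * ‖g v‖ + ‖h v‖ * ‖fderiv ℝ g v‖ := by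
    refine ContinuousLinearMap.opNorm_le_bound _ (by positivity) fun x => ?_
    rw [fderiv_inner_apply 𝕜 hh hg]
    grw [norm_add_le, norm_inner_le_norm, norm_inner_le_norm, (fderiv ℝ g v).le_opNorm,
      (fderiv ℝ h v).le_opNorm]
    linarith
  simpa only [← ofReal_norm, ← ENNReal.ofReal_mul (norm_nonneg _),
    ← ENNReal.ofReal_add (mul_nonneg (norm_nonneg _) (norm_nonneg _))
      (mul_nonneg (norm_nonneg _) (norm_nonneg _))] using ENNReal.ofReal_le_ofReal hbound

theorem enorm_mul_enorm_mul_enorm_inner_sub_dilationAlong_le {g h : E → V}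
    {θ : ℝ → ℝ} (hθ : ∀ x, |x * θ x| ≤ 1)
    (hh : ContDiff ℝ 1 h) (hg : ContDiff ℝ 1 g) (k v : E) :
    ‖k‖ₑ * (‖θ ⟪k, v⟫‖ₑ * ‖inner 𝕜 (h v) (g v) -
        inner 𝕜 (h (dilationAlong k (-1) v)) (g (dilationAlong k (-1) v))‖ₑ) ≤
      (∫⁻ t in Set.Icc (-1 : ℝ) 1, ‖fderiv ℝ h (dilationAlong k t v)‖ₑ) * ‖g v‖ₑ +
        (∫⁻ t in Set.Icc (-1 : ℝ) 1, ‖fderiv ℝ g (dilationAlong k t v)‖ₑ) *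
          ‖h (dilationAlong k (-1) v)‖ₑ := by
  let R := dilationAlong k (-1)
  let J (f : E → V) (v : E) : ℝ≥0∞ :=
    ∫⁻ t in Set.Icc (-1 : ℝ) 1, ‖fderiv ℝ f (dilationAlong k t v)‖ₑ
  have hθ' : ‖θ ⟪k, v⟫‖ₑ * ‖⟪k, v⟫‖ₑ ≤ 1 := by
    rw [mul_comm, ← enorm_mul, Real.enorm_eq_ofReal_abs]
    exact ENNReal.ofReal_le_one.2 (hθ _)
  calc _ ≤ ‖k‖ₑ * (‖θ ⟪k, v⟫‖ₑ *
          (‖h v - h (R v)‖ₑ * ‖g v‖ₑ + ‖h (R v)‖ₑ * ‖g v - g (R v)‖ₑ)) := by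
        gcongr
        exact enorm_inner_sub_inner_le _ _ _ _
    _ = ‖θ ⟪k, v⟫‖ₑ * (‖k‖ₑ * ‖h v - h (R v)‖ₑ * ‖g v‖ₑ +
          ‖k‖ₑ * ‖g v - g (R v)‖ₑ * ‖h (R v)‖ₑ) := by ring
    _ ≤ ‖θ ⟪k, v⟫‖ₑ * (‖⟪k, v⟫‖ₑ * J h v * ‖g v‖ₑ + ‖⟪k, v⟫‖ₑ * J g v * ‖h (R v)‖ₑ) := by
        gcongr ‖θ ⟪k, v⟫‖ₑ * (?_ * ‖g v‖ₑ + ?_ * ‖h (R v)‖ₑ)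
        · exact enorm_mul_enorm_sub_dilationAlong_neg_one_le k hh v
        · exact enorm_mul_enorm_sub_dilationAlong_neg_one_le k hg v
    _ = ‖θ ⟪k, v⟫‖ₑ * ‖⟪k, v⟫‖ₑ * (J h v * ‖g v‖ₑ + J g v * ‖h (R v)‖ₑ) := by ring
    _ ≤ _ := mul_le_of_le_one_left' hθ'

variable [MeasurableSpace E] [BorelSpace E] [FiniteDimensional ℝ E] {μ : Measure E}
  {p q : ℝ≥0∞} [p.HolderConjugate q] {g h : E → V}

theorem lintegral_enorm_fderiv_inner_le (hh : ContDiff ℝ 1 h) (hg : ContDiff ℝ 1 g) :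
    ∫⁻ v, ‖fderiv ℝ (fun v => inner 𝕜 (h v) (g v)) v‖ₑ ∂μ ≤
      eLpNorm (fderiv ℝ h) p μ * eLpNorm g q μ + eLpNorm h p μ * eLpNorm (fderiv ℝ g) q μ := by
  have hh' := hh.continuous_fderiv one_ne_zero
  have hg' := hg.continuous_fderiv one_ne_zero
  calc ∫⁻ v, ‖fderiv ℝ (fun v => inner 𝕜 (h v) (g v)) v‖ₑ ∂μ
      ≤ ∫⁻ v, ‖fderiv ℝ h v‖ₑ * ‖g v‖ₑ + ‖h v‖ₑ * ‖fderiv ℝ g v‖ₑ ∂μ :=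
        lintegral_mono fun v => enorm_fderiv_inner_le (hh.differentiable one_ne_zero v)
          (hg.differentiable one_ne_zero v)
    _ = ∫⁻ v, ‖fderiv ℝ h v‖ₑ * ‖g v‖ₑ ∂μ + ∫⁻ v, ‖h v‖ₑ * ‖fderiv ℝ g v‖ₑ ∂μ :=
        lintegral_add_left (hh'.enorm.measurable.mul hg.continuous.enorm.measurable) _
    _ ≤ _ := add_le_add
        (lintegral_enorm_mul_le_eLpNorm_mul_eLpNorm hh'.aestronglyMeasurable
          hg.continuous.aestronglyMeasurable p q)
        (lintegral_enorm_mul_le_eLpNorm_mul_eLpNorm hh.continuous.aestronglyMeasurable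
          hg'.aestronglyMeasurable p q)

theorem integrable_fderiv_inner (hh : ContDiff ℝ 1 h) (hg : ContDiff ℝ 1 g) (hhp : MemLp h p μ)
    (hgq : MemLp g q μ) (hhp' : MemLp (fderiv ℝ h) p μ) (hgq' : MemLp (fderiv ℝ g) q μ) :
    Integrable (fderiv ℝ fun v => inner 𝕜 (h v) (g v)) μ := by
  refine ⟨((hh.inner 𝕜 hg).continuous_fderiv one_ne_zero).aestronglyMeasurable, ?_⟩
  have := hhp.eLpNorm_lt_top
  have := hgq.eLpNorm_lt_top
  have := hhp'.eLpNorm_lt_top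
  have := hgq'.eLpNorm_lt_top
  exact (lintegral_enorm_fderiv_inner_le (p := p) (q := q) hh hg).trans_lt (by finiteness)

variable [μ.IsAddHaarMeasure]

theorem enorm_mul_lintegral_enorm_inner_sub_dilationAlong_le {θ : ℝ → ℝ}
    (hθ : ∀ x, |x * θ x| ≤ 1) {k : E} (hk : k ≠ 0) (hp : p ≠ ∞) (hq : q ≠ ∞)
    (hh : ContDiff ℝ 1 h) (hg : ContDiff ℝ 1 g) :
    ‖k‖ₑ * ∫⁻ v, ‖θ ⟪k, v⟫‖ₑ * ‖inner 𝕜 (h v) (g v) -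
        inner 𝕜 (h (dilationAlong k (-1) v)) (g (dilationAlong k (-1) v))‖ₑ ∂μ ≤
      2 * (q * (eLpNorm (fderiv ℝ h) p μ * eLpNorm g q μ) +
        p * (eLpNorm h p μ * eLpNorm (fderiv ℝ g) q μ)) := by
  let R := dilationAlong k (-1)
  let J (f : E → V) (v : E) : ℝ≥0∞ :=
    ∫⁻ t in Set.Icc (-1 : ℝ) 1, ‖fderiv ℝ f (dilationAlong k t v)‖ₑ
  have hR : MeasurePreserving R μ μ := dilationAlong.measurePreserving_neg_one μ hk
  have hh' := (hh.continuous_fderiv one_ne_zero).stronglyMeasurable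
  have hg' := (hg.continuous_fderiv one_ne_zero).stronglyMeasurable
  have hgm := hg.continuous.stronglyMeasurable
  have hhR : StronglyMeasurable (h ∘ R) :=
    hh.continuous.stronglyMeasurable.comp_measurable hR.measurable
  have hJh : Measurable (J h) :=
    (hh'.enorm.comp (dilationAlong.continuous_uncurry k).measurable).lintegral_prod_right'
  calc _ ≤ ∫⁻ v, J h v * ‖g v‖ₑ + J g v * ‖h (R v)‖ₑ ∂μ := by
        rw [← lintegral_const_mul' _ _ enorm_ne_top]
        exact lintegral_mono fun v =>
          enorm_mul_enorm_mul_enorm_inner_sub_dilationAlong_le hθ hh hg k v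
    _ = ∫⁻ v, J h v * ‖g v‖ₑ ∂μ + ∫⁻ v, J g v * ‖(h ∘ R) v‖ₑ ∂μ :=
        lintegral_add_left (hJh.mul hgm.enorm) _
    _ ≤ 2 * q * (eLpNorm (fderiv ℝ h) p μ * eLpNorm g q μ) +
          2 * p * (eLpNorm (fderiv ℝ g) q μ * eLpNorm (h ∘ R) p μ) :=
        add_le_add (lintegral_lintegral_dilationAlong_mul_le μ hh' hgm hk p hq)
          (lintegral_lintegral_dilationAlong_mul_le μ hg' hhR hk q hp)
    _ = _ := by
        rw [eLpNorm_comp_measurePreserving hh.continuous.aestronglyMeasurable hR]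
        ring

theorem enorm_mul_enorm_integral_deriv_smul_inner_le {A A' : ℝ → ℝ} {M C : ℝ}
    (hA : ∀ x, HasDerivAt A (A' x) x) (hM : ∀ x, |A x| ≤ M) (hA' : Continuous A')
    (hC : ∀ x, |A' x| ≤ C) (k : E) (hh : ContDiff ℝ 1 h) (hg : ContDiff ℝ 1 g)
    (hhp : MemLp h p μ) (hgq : MemLp g q μ) (hhp' : MemLp (fderiv ℝ h) p μ)
    (hgq' : MemLp (fderiv ℝ g) q μ) :
    ‖k‖ₑ * ‖∫ v, A' ⟪k, v⟫ • inner 𝕜 (h v) (g v) ∂μ‖ₑ ≤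
      ENNReal.ofReal M * (eLpNorm (fderiv ℝ h) p μ * eLpNorm g q μ +
        eLpNorm h p μ * eLpNorm (fderiv ℝ g) q μ) := by
  have hF := integrable_inner_of_memLp (𝕜 := 𝕜) hhp hgq
  grw [enorm_mul_enorm_integral_deriv_comp_inner_smul_le μ hA hM k
    ((hh.inner 𝕜 hg).differentiable one_ne_zero) hF
    (integrable_fderiv_inner hh hg hhp hgq hhp' hgq') (integrable_comp_inner_smul k hA' hC hF),
    lintegral_enorm_fderiv_inner_le (p := p) (q := q) hh hg]

theorem enorm_mul_enorm_integral_odd_smul_inner_le {θ : ℝ → ℝ} {C : ℝ} (hθ : θ.Odd)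
    (hθc : Continuous θ) (hC : ∀ x, |θ x| ≤ C) (hθ₁ : ∀ x, |x * θ x| ≤ 1) {k : E} (hk : k ≠ 0)
    (hp : p ≠ ∞) (hq : q ≠ ∞) (hh : ContDiff ℝ 1 h) (hg : ContDiff ℝ 1 g) (hhp : MemLp h p μ)
    (hgq : MemLp g q μ) :
    ‖k‖ₑ * ‖∫ v, θ ⟪k, v⟫ • inner 𝕜 (h v) (g v) ∂μ‖ₑ ≤
      q * (eLpNorm (fderiv ℝ h) p μ * eLpNorm g q μ) +
        p * (eLpNorm h p μ * eLpNorm (fderiv ℝ g) q μ) := by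
  have hint := integrable_comp_inner_smul k hθc hC (integrable_inner_of_memLp (𝕜 := 𝕜) hhp hgq)
  rw [← ENNReal.mul_le_mul_iff_right two_ne_zero ENNReal.ofNat_ne_top, mul_left_comm]
  grw [two_mul_enorm_integral_odd_smul_le μ hθ hk hint]
  exact enorm_mul_lintegral_enorm_inner_sub_dilationAlong_le hθ₁ hk hp hq hh hg

end Inner

section Resolvent

variable {ε : ℝ}

theorem div_add_I_mul_eq_smul_sub (hε : ε ≠ 0) (x : ℝ) (z : ℂ) :
    z / (ε + Complex.I * x) =
      (ε / (ε ^ 2 + x ^ 2)) • z - Complex.I * ((x / (ε ^ 2 + x ^ 2)) • z) := by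
  have hden : (ε : ℂ) + Complex.I * x ≠ 0 := fun h => hε (by simpa using congrArg Complex.re h)
  have hsq : (ε : ℂ) ^ 2 + x ^ 2 ≠ 0 := mod_cast (by positivity : ε ^ 2 + x ^ 2 ≠ 0)
  simp only [Complex.real_smul]
  push_cast
  field_simp
  linear_combination (z * x ^ 2) * Complex.I_sq

theorem hasDerivAt_arctan_div (hε : ε ≠ 0) (x : ℝ) :
    HasDerivAt (fun x => Real.arctan (x / ε)) (ε / (ε ^ 2 + x ^ 2)) x := by
  convert ((hasDerivAt_id' x).div_const ε).arctan using 1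
  field_simp

theorem abs_arctan_le_pi_div_two (x : ℝ) : |Real.arctan x| ≤ π / 2 :=
  abs_le.2 ⟨(Real.neg_pi_div_two_lt_arctan x).le, (Real.arctan_lt_pi_div_two x).le⟩

theorem abs_left_div_sq_add_sq_le_inv (hε : ε ≠ 0) (x : ℝ) : |ε / (ε ^ 2 + x ^ 2)| ≤ |ε|⁻¹ := by
  have : 0 < ε ^ 2 + x ^ 2 := by positivity
  rw [abs_div, abs_of_pos this, inv_eq_one_div, div_le_div_iff₀ this (by positivity)]
  nlinarith [abs_mul_abs_self ε, sq_nonneg x]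

theorem abs_right_div_sq_add_sq_le_inv (hε : ε ≠ 0) (x : ℝ) : |x / (ε ^ 2 + x ^ 2)| ≤ |ε|⁻¹ := by
  have : 0 < ε ^ 2 + x ^ 2 := by positivity
  rw [abs_div, abs_of_pos this, inv_eq_one_div, div_le_div_iff₀ this (by positivity)]
  nlinarith [sq_abs x, sq_abs ε, sq_nonneg (|x| - |ε|), sq_nonneg x, sq_nonneg ε]

theorem abs_mul_div_sq_add_sq_le_one (ε x : ℝ) : |x * (x / (ε ^ 2 + x ^ 2))| ≤ 1 := by
  rw [← mul_div_assoc, ← sq, abs_of_nonneg (by positivity)]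
  exact div_le_one_of_le₀ (by nlinarith [sq_nonneg ε]) (by positivity)

variable {V : Type*} [NormedAddCommGroup V] [InnerProductSpace ℂ V] [NormedSpace ℝ V]
  [MeasurableSpace E] [BorelSpace E] [FiniteDimensional ℝ E] {μ : Measure E} [μ.IsAddHaarMeasure]
  {p q : ℝ≥0∞} [p.HolderConjugate q] {g h : E → V} {k : E}

theorem enorm_mul_enorm_integral_inner_div_le (hp : p ≠ ∞) (hq : q ≠ ∞) (hh : ContDiff ℝ 1 h)
    (hg : ContDiff ℝ 1 g) (hhp : MemLp h p μ) (hgq : MemLp g q μ) (hhp' : MemLp (fderiv ℝ h) p μ)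
    (hgq' : MemLp (fderiv ℝ g) q μ) (hk : k ≠ 0) (hε : ε ≠ 0) :
    ‖k‖ₑ * ‖∫ v, inner ℂ (h v) (g v) / (ε + Complex.I * ((⟪k, v⟫ : ℝ) : ℂ)) ∂μ‖ₑ ≤
      (ENNReal.ofReal (π / 2) + q) * (eLpNorm (fderiv ℝ h) p μ * eLpNorm g q μ) +
        (ENNReal.ofReal (π / 2) + p) * (eLpNorm h p μ * eLpNorm (fderiv ℝ g) q μ) := by
  have hden (x : ℝ) : ε ^ 2 + x ^ 2 ≠ 0 := by positivity
  have hcont₀ : Continuous fun x : ℝ => ε / (ε ^ 2 + x ^ 2) := by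
    fun_prop (disch := simpa using hden)
  have hcont₁ : Continuous fun x : ℝ => x / (ε ^ 2 + x ^ 2) := by
    fun_prop (disch := simpa using hden)
  have hconj_odd : Function.Odd fun x : ℝ => x / (ε ^ 2 + x ^ 2) := fun x => by
    simp only [neg_sq, neg_div]
  have hF := integrable_inner_of_memLp (𝕜 := ℂ) hhp hgq
  have heven := enorm_mul_enorm_integral_deriv_smul_inner_le (𝕜 := ℂ) (hasDerivAt_arctan_div hε)
    (fun x => abs_arctan_le_pi_div_two _) hcont₀ (abs_left_div_sq_add_sq_le_inv hε) k hh hg hhp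
    hgq hhp' hgq'
  have hodd := enorm_mul_enorm_integral_odd_smul_inner_le (𝕜 := ℂ) hconj_odd hcont₁
    (abs_right_div_sq_add_sq_le_inv hε) (abs_mul_div_sq_add_sq_le_one ε) hk hp hq hh hg hhp hgq
  simp only [div_add_I_mul_eq_smul_sub hε]
  rw [integral_sub (integrable_comp_inner_smul k hcont₀ (abs_left_div_sq_add_sq_le_inv hε) hF)
    ((integrable_comp_inner_smul k hcont₁ (abs_right_div_sq_add_sq_le_inv hε) hF).const_mul _),
    integral_const_mul]
  grw [enorm_sub_le, enorm_mul]
  rw [enorm_eq_nnnorm Complex.I, Complex.nnnorm_I, ENNReal.coe_one, one_mul, mul_add]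
  grw [heven, hodd]
  apply le_of_eq
  ring

theorem stmt3_general (hp : p ≠ ∞) (hq : q ≠ ∞) (hh : ContDiff ℝ 1 h) (hg : ContDiff ℝ 1 g)
    (hhp : MemLp h p μ) (hgq : MemLp g q μ) (hhp' : MemLp (fderiv ℝ h) p μ)
    (hgq' : MemLp (fderiv ℝ g) q μ) (hk : k ≠ 0) (hε : ε ≠ 0) :
    ‖∫ v, inner ℂ (h v) (g v) / ((ε : ℂ) + Complex.I * ((⟪k, v⟫ : ℝ) : ℂ)) ∂μ‖ ≤
      ((π / 2 + q.toReal) * ((eLpNorm (fderiv ℝ h) p μ).toReal * (eLpNorm g q μ).toReal) +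
        (π / 2 + p.toReal) * ((eLpNorm h p μ).toReal * (eLpNorm (fderiv ℝ g) q μ).toReal)) /
          ‖k‖ := by
  have hbound := enorm_mul_enorm_integral_inner_div_le hp hq hh hg hhp hgq hhp' hgq' hk hε
  have := hhp.eLpNorm_ne_top
  have := hgq.eLpNorm_ne_top
  have := hhp'.eLpNorm_ne_top
  have := hgq'.eLpNorm_ne_top
  rw [le_div_iff₀' (norm_pos_iff.2 hk)]
  have htoReal := ENNReal.toReal_mono (by finiteness) hbound
  rwa [ENNReal.toReal_mul, toReal_enorm, toReal_enorm,
    ENNReal.toReal_add (by finiteness) (by finiteness), ENNReal.toReal_mul, ENNReal.toReal_mul,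
    ENNReal.toReal_mul, ENNReal.toReal_mul, ENNReal.toReal_add (by finiteness) hq,
    ENNReal.toReal_add (by finiteness) hp, ENNReal.toReal_ofReal (by positivity)] at htoReal

end Resolvent

end InnerProductSpace

/-- Bilinear estimate for the resolvent `(ε + i k·v)⁻¹` of free transport, uniform in
`ε > 0`: `|∫ conj(h) g / (ε + i k·v)| ≤ (C/|k|) ((‖h‖₂ + ‖∇h‖₂)‖g‖₂ + ‖h‖₂‖∇g‖₂)`. -/
theorem stmt3 (d : ℕ) (hd : 1 ≤ d) :
    ∃ C : ℝ, 0 < C ∧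
      ∀ g h : EuclideanSpace ℝ (Fin d) → ℂ,
        ContDiff ℝ (⊤ : ℕ∞) g → HasCompactSupport g →
        ContDiff ℝ (⊤ : ℕ∞) h → HasCompactSupport h →
        ∀ k : EuclideanSpace ℝ (Fin d), k ≠ 0 →
        ∀ ε : ℝ, 0 < ε →
        ‖∫ v, (starRingEnd ℂ) (h v) * g v / ((ε : ℂ) + Complex.I * ((⟪k, v⟫ : ℝ) : ℂ))‖
          ≤ (C / ‖k‖) *
            (((eLpNorm h 2 volume).toReal + (eLpNorm (fderiv ℝ h) 2 volume).toReal) *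
                (eLpNorm g 2 volume).toReal
              + (eLpNorm h 2 volume).toReal * (eLpNorm (fderiv ℝ g) 2 volume).toReal) := by
  refine ⟨π / 2 + 2, by positivity, fun g h hg hgs hh hhs k hk ε hε => ?_⟩
  have hg₁ : ContDiff ℝ 1 g := hg.of_le (mod_cast le_top)
  have hh₁ : ContDiff ℝ 1 h := hh.of_le (mod_cast le_top)
  have hmain := stmt3_general (μ := volume) (p := 2) (q := 2) ENNReal.ofNat_ne_top
    ENNReal.ofNat_ne_top hh₁ hg₁ (hh.continuous.memLp_of_hasCompactSupport hhs)
    (hg.continuous.memLp_of_hasCompactSupport hgs)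
    ((hh₁.continuous_fderiv one_ne_zero).memLp_of_hasCompactSupport (hhs.fderiv ℝ))
    ((hg₁.continuous_fderiv one_ne_zero).memLp_of_hasCompactSupport (hgs.fderiv ℝ)) hk hε.ne'
  simp only [RCLike.inner_apply, mul_comm (g _)] at hmain
  refine hmain.trans ?_
  rw [ENNReal.toReal_ofNat, ← mul_add, div_mul_eq_mul_div]
  gcongr
  exact le_add_of_nonneg_left ENNReal.toReal_nonneg
end

section
/- There exists an absolute constant C > 0 such that for all compactly supported smooth functions g, h : ℝ → ℂ, all ε > 0, and all t ∈ ℝ, one has | ∫_ℝ h(t−s) g(t−s) / (ε + i s) ds | ≤ C · ( (‖h‖_{L²(ℝ)} + ‖h'‖_{L²(ℝ)}) ‖g‖_{L²(ℝ)} + ‖h‖_{L²(ℝ)} ‖g'‖_{L²(ℝ)} ). Equivalently, the convolution of the kernel H_ε(s) = (ε + i s)^{−1} with the product h·g is bounded in L^∞(ℝ) by C(‖h‖_{H¹}‖g‖_{L²} + ‖h‖_{L²}‖g‖_{H¹}), uniformly in ε > 0. -/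
open MeasureTheory
open scoped ENNReal

/-!
Write `u = h g`. Averaging the integrand with its reflection splits the kernel into its even part,
a Poisson kernel of total mass `π`, and its odd part, which is bounded by `1 / |s|`:
`2 ∫ u(s) / (ε + i s) ds = ∫ (u(s) + u(-s)) ε / (ε² + s²) ds - i ∫ (u(s) - u(-s)) s / (ε² + s²) ds`.
The first term is at most `π ‖u‖_∞ ≤ π ‖u'‖_{L¹}`, which the product rule and Hölder's inequality
control. For the second, distribute the difference over the product,
`u(s) - u(-s) = (h(s) - h(-s)) g(s) + h(-s) (g(s) - g(-s))`,
and apply Hardy's inequality to `(h(s) - h(-s)) / s` and `(g(s) - g(-s)) / s`. As Hardy's inequality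
holds in `L^p` for all `1 < p < ∞`, the two `L²` norms may be replaced by conjugate `L^p` and `L^q`
norms.
-/

open Set Filter Topology
open scoped Real

section Lp

variable {E F : Type*} [NormedAddCommGroup E] [NormedAddCommGroup F]

theorem lintegral_enorm_mul_enorm_le {α : Type*} {m : MeasurableSpace α} {μ : Measure α}
    {f : α → E} {g : α → F} (p q : ℝ≥0∞) [p.HolderConjugate q]
    (hf : AEStronglyMeasurable f μ) (hg : AEStronglyMeasurable g μ) :
    ∫⁻ x, ‖f x‖ₑ * ‖g x‖ₑ ∂μ ≤ eLpNorm f p μ * eLpNorm g q μ := by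
  have h := eLpNorm_smul_le_mul_eLpNorm (p := p) (q := q) (r := 1) hg.norm hf.norm
  simpa [eLpNorm_one_eq_lintegral_enorm, enorm_mul] using h

theorem eLpNorm_comp_mul_right (f : ℝ → E) (p : ℝ≥0∞) {a : ℝ} (ha : a ≠ 0) :
    eLpNorm (fun x => f (x * a)) p volume =
      ENNReal.ofReal |a⁻¹| ^ p⁻¹.toReal * eLpNorm f p volume := by
  have hmap := (Homeomorph.mulRight₀ a ha).measurableEmbedding.eLpNorm_map_measure
    (μ := volume) (g := f) (p := p)
  rw [Homeomorph.coe_mulRight₀, Real.map_volume_mul_right ha,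
    eLpNorm_smul_measure_of_ne_zero (by simpa using ha), one_div, smul_eq_mul] at hmap
  exact hmap.symm

theorem eLpNorm_comp_const_sub (f : ℝ → E) (p : ℝ≥0∞) (t : ℝ) :
    eLpNorm (fun x => f (t - x)) p volume = eLpNorm f p volume := by
  have hmap := (Homeomorph.subLeft t).measurableEmbedding.eLpNorm_map_measure
    (μ := volume) (g := f) (p := p)
  rw [Homeomorph.coe_subLeft, (Measure.measurePreserving_sub_left volume t).map_eq] at hmap
  exact hmap.symm

theorem eLpNorm_deriv_comp_const_sub [NormedSpace ℝ E] (f : ℝ → E) (p : ℝ≥0∞) (t : ℝ) :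
    eLpNorm (deriv fun x => f (t - x)) p volume = eLpNorm (deriv f) p volume := by
  have hderiv : (deriv fun x => f (t - x)) = -fun x => deriv f (t - x) :=
    funext fun x => deriv_comp_const_sub f t x
  rw [hderiv, eLpNorm_neg, eLpNorm_comp_const_sub]

theorem lintegral_Ioc_ofReal_abs_inv_rpow_inv (p q : ℝ≥0∞) [p.HolderConjugate q] (hq : q ≠ ∞) :
    ∫⁻ x in Ioc (0 : ℝ) 1, ENNReal.ofReal |x⁻¹| ^ p⁻¹.toReal = q := by
  have hpq : p⁻¹.toReal = 1 - q⁻¹.toReal := by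
    rw [← ENNReal.HolderConjugate.one_sub_inv q p, ENNReal.toReal_sub_of_le
      (ENNReal.inv_le_one.2 (ENNReal.HolderConjugate.one_le q p)) ENNReal.one_ne_top,
      ENNReal.toReal_one]
  have hq0 : 0 < q⁻¹.toReal := ENNReal.toReal_pos (ENNReal.inv_ne_zero.2 hq)
    (ENNReal.inv_ne_top.2 (ENNReal.HolderConjugate.ne_zero q p))
  have hr : -1 < -p⁻¹.toReal := by linarith
  calc ∫⁻ x in Ioc (0 : ℝ) 1, ENNReal.ofReal |x⁻¹| ^ p⁻¹.toReal
      = ∫⁻ x in Ioc (0 : ℝ) 1, ENNReal.ofReal (x ^ (-p⁻¹.toReal)) := by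
        refine setLIntegral_congr_fun measurableSet_Ioc fun x hx => ?_
        rw [abs_of_pos (inv_pos.2 hx.1), ENNReal.ofReal_rpow_of_pos (inv_pos.2 hx.1),
          Real.inv_rpow hx.1.le, Real.rpow_neg hx.1.le]
    _ = ENNReal.ofReal (∫ x in (0 : ℝ)..1, x ^ (-p⁻¹.toReal)) := by
        rw [intervalIntegral.integral_of_le zero_le_one, ofReal_integral_eq_lintegral_ofReal]
        · exact (intervalIntegral.intervalIntegrable_rpow' hr).1
        · exact (ae_restrict_iff' measurableSet_Ioc).2
            (ae_of_all _ fun x hx => Real.rpow_nonneg hx.1.le _)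
    _ = q := by
        rw [integral_rpow (Or.inl hr), hpq, neg_sub, sub_add_cancel, Real.one_rpow,
          Real.zero_rpow hq0.ne', sub_zero, one_div, ← ENNReal.toReal_inv, inv_inv,
          ENNReal.ofReal_toReal hq]

end Lp

section Derivative

variable {E : Type*} [NormedAddCommGroup E] [NormedSpace ℝ E] [CompleteSpace E] {f : ℝ → E}

theorem enorm_sub_le_lintegral_enorm_deriv (hf : Differentiable ℝ f) {a b : ℝ} (hab : a ≤ b) :
    ‖f b - f a‖ₑ ≤ ∫⁻ x in Ioc a b, ‖deriv f x‖ₑ := by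
  rcases eq_or_ne (∫⁻ x in Ioc a b, ‖deriv f x‖ₑ) ∞ with htop | hfin
  · exact htop ▸ le_top
  have hint : IntegrableOn (deriv f) (Ioc a b) := ⟨aestronglyMeasurable_deriv f _, hfin.lt_top⟩
  rw [← intervalIntegral.integral_deriv_eq_sub (fun x _ => hf x)
    ((intervalIntegrable_iff_integrableOn_Ioc_of_le hab).2 hint),
    intervalIntegral.integral_of_le hab]
  exact enorm_integral_le_lintegral_enorm _

theorem enorm_le_lintegral_enorm_deriv (hf : Differentiable ℝ f) (hint : Integrable f) (x : ℝ) :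
    ‖f x‖ₑ ≤ ∫⁻ y, ‖deriv f y‖ₑ := by
  rcases eq_or_ne (∫⁻ y, ‖deriv f y‖ₑ) ∞ with htop | hfin
  · exact htop ▸ le_top
  have hint' : Integrable (deriv f) := ⟨aestronglyMeasurable_deriv f _, hfin.lt_top⟩
  have hlim : Tendsto f atBot (𝓝 0) :=
    tendsto_zero_of_hasDerivAt_of_integrableOn_Iic (a := x) (fun y _ => (hf y).hasDerivAt)
      hint'.integrableOn hint.integrableOn
  have hdiff : Tendsto (fun y => ‖f x - f y‖ₑ) atBot (𝓝 ‖f x‖ₑ) := by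
    simpa only [sub_zero] using (tendsto_const_nhds.sub hlim).enorm
  refine le_of_tendsto hdiff ((eventually_le_atBot x).mono fun y hy => ?_)
  exact (enorm_sub_le_lintegral_enorm_deriv hf hy).trans (setLIntegral_le_lintegral _ _)

theorem enorm_sub_zero_div_le_lintegral_enorm_deriv (hf : Differentiable ℝ f) (s : ℝ) :
    ‖f s - f 0‖ₑ / ‖s‖ₑ ≤ ∫⁻ σ in Ioc 0 1, ‖deriv f (s * σ)‖ₑ := by
  rcases eq_or_ne s 0 with rfl | _
  · simp
  have hderiv : (deriv fun σ => f (s * σ)) = fun σ => s • deriv f (s * σ) :=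
    funext fun σ => deriv_comp_mul_left s f σ
  have hdiff : Differentiable ℝ fun σ => f (s * σ) := hf.comp (by fun_prop)
  have hFTC := enorm_sub_le_lintegral_enorm_deriv hdiff zero_le_one
  simp only [hderiv, mul_one, mul_zero, enorm_smul] at hFTC
  rw [lintegral_const_mul' _ _ enorm_ne_top] at hFTC
  exact ENNReal.div_le_of_le_mul' hFTC

variable {F : Type*} [NormedAddCommGroup F] {g : ℝ → F} (p q : ℝ≥0∞) [p.HolderConjugate q]

-- Hardy's inequality in dual form. The constant is `∫₀¹ σ ^ (-1 / p) dσ = q`: the quotient is an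
-- average of the dilates `f' (s σ)`, whose `L^p` norms are `σ ^ (-1 / p) ‖f'‖_p`.
theorem lintegral_enorm_sub_zero_div_mul_enorm_le (hq : q ≠ ∞) (hf : Differentiable ℝ f)
    (hg : AEStronglyMeasurable g) :
    ∫⁻ s, ‖f s - f 0‖ₑ / ‖s‖ₑ * ‖g s‖ₑ ≤
      q * (eLpNorm (deriv f) p volume * eLpNorm g q volume) := by
  have hmeas : AEMeasurable (Function.uncurry fun s σ : ℝ => ‖deriv f (s * σ)‖ₑ * ‖g s‖ₑ)
      (volume.prod (volume.restrict (Ioc 0 1))) :=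
    ((stronglyMeasurable_deriv f).comp_measurable measurable_mul).enorm.aemeasurable.mul
      hg.comp_fst.enorm
  have hdil : ∀ σ ∈ Ioc (0 : ℝ) 1, ∫⁻ s, ‖deriv f (s * σ)‖ₑ * ‖g s‖ₑ ≤
      ENNReal.ofReal |σ⁻¹| ^ p⁻¹.toReal *
        (eLpNorm (deriv f) p volume * eLpNorm g q volume) := fun σ hσ => by
    rw [← mul_assoc, ← eLpNorm_comp_mul_right _ _ hσ.1.ne']
    refine lintegral_enorm_mul_enorm_le p q ?_ hg
    exact ((stronglyMeasurable_deriv f).comp_measurable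
      (measurable_mul_const σ)).aestronglyMeasurable
  calc ∫⁻ s, ‖f s - f 0‖ₑ / ‖s‖ₑ * ‖g s‖ₑ
      ≤ ∫⁻ s, (∫⁻ σ in Ioc 0 1, ‖deriv f (s * σ)‖ₑ) * ‖g s‖ₑ := by
        gcongr with s
        exact enorm_sub_zero_div_le_lintegral_enorm_deriv hf s
    _ = ∫⁻ s, ∫⁻ σ in Ioc 0 1, ‖deriv f (s * σ)‖ₑ * ‖g s‖ₑ := by
        simp only [lintegral_mul_const' _ _ enorm_ne_top]
    _ = ∫⁻ σ in Ioc 0 1, ∫⁻ s, ‖deriv f (s * σ)‖ₑ * ‖g s‖ₑ :=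
        lintegral_lintegral_swap hmeas
    _ ≤ ∫⁻ σ in Ioc (0 : ℝ) 1, ENNReal.ofReal |σ⁻¹| ^ p⁻¹.toReal *
          (eLpNorm (deriv f) p volume * eLpNorm g q volume) :=
        setLIntegral_mono' measurableSet_Ioc hdil
    _ = q * (eLpNorm (deriv f) p volume * eLpNorm g q volume) := by
        rw [lintegral_mul_const _ (by fun_prop),
          lintegral_Ioc_ofReal_abs_inv_rpow_inv p q hq]

theorem lintegral_enorm_sub_neg_div_mul_enorm_le (hq : q ≠ ∞) (hf : Differentiable ℝ f)
    (hg : AEStronglyMeasurable g) :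
    ∫⁻ s, ‖f s - f (-s)‖ₑ / ‖s‖ₑ * ‖g s‖ₑ ≤
      2 * q * (eLpNorm (deriv f) p volume * eLpNorm g q volume) := by
  have hf_neg : Differentiable ℝ fun s => f (-s) := hf.comp (by fun_prop)
  have hnorm_neg : eLpNorm (deriv fun s => f (-s)) p volume = eLpNorm (deriv f) p volume := by
    simpa only [zero_sub] using eLpNorm_deriv_comp_const_sub f p 0
  have hpos := lintegral_enorm_sub_zero_div_mul_enorm_le p q hq hf hg
  have hneg := lintegral_enorm_sub_zero_div_mul_enorm_le p q hq hf_neg hg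
  rw [hnorm_neg] at hneg
  simp only [neg_zero] at hneg
  have htri : ∀ s, ‖f s - f (-s)‖ₑ / ‖s‖ₑ * ‖g s‖ₑ ≤
      ‖f s - f 0‖ₑ / ‖s‖ₑ * ‖g s‖ₑ + ‖f (-s) - f 0‖ₑ / ‖s‖ₑ * ‖g s‖ₑ := fun s => by
    rw [← add_mul, ← ENNReal.add_div, ← sub_sub_sub_cancel_right (f s) (f (-s)) (f 0)]
    gcongr
    exact enorm_sub_le
  calc ∫⁻ s, ‖f s - f (-s)‖ₑ / ‖s‖ₑ * ‖g s‖ₑ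
      ≤ ∫⁻ s, (‖f s - f 0‖ₑ / ‖s‖ₑ * ‖g s‖ₑ + ‖f (-s) - f 0‖ₑ / ‖s‖ₑ * ‖g s‖ₑ) :=
        lintegral_mono htri
    _ = (∫⁻ s, ‖f s - f 0‖ₑ / ‖s‖ₑ * ‖g s‖ₑ) + ∫⁻ s, ‖f (-s) - f 0‖ₑ / ‖s‖ₑ * ‖g s‖ₑ := by
        refine lintegral_add_left' (AEMeasurable.mul ?_ hg.enorm) _
        exact (((hf.continuous.sub continuous_const).enorm.measurable).div
          continuous_enorm.measurable).aemeasurable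
    _ ≤ 2 * q * (eLpNorm (deriv f) p volume * eLpNorm g q volume) := by
        rw [mul_assoc, two_mul]
        exact add_le_add hpos hneg

end Derivative

section Product

theorem enorm_mul_add_mul_le {A : Type*} [NonUnitalSeminormedRing A] (a b c d : A) :
    ‖a * b + c * d‖ₑ ≤ ‖a‖ₑ * ‖b‖ₑ + ‖c‖ₑ * ‖d‖ₑ := by
  simp only [enorm_eq_nnnorm]
  exact_mod_cast (nnnorm_add_le _ _).trans (add_le_add (nnnorm_mul_le a b) (nnnorm_mul_le c d))

variable {A : Type*} [NormedRing A] [NormedAlgebra ℝ A] [CompleteSpace A] {f g : ℝ → A}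
  (p q : ℝ≥0∞) [p.HolderConjugate q]

theorem enorm_mul_le_eLpNorm_deriv_mul_add (hf : Differentiable ℝ f) (hg : Differentiable ℝ g)
    (hfp : MemLp f p) (hgq : MemLp g q) (x : ℝ) :
    ‖f x * g x‖ₑ ≤ eLpNorm (deriv f) p volume * eLpNorm g q volume +
      eLpNorm f p volume * eLpNorm (deriv g) q volume := by
  have hf' := aestronglyMeasurable_deriv f volume
  have hg' := aestronglyMeasurable_deriv g volume
  have hderiv : ∀ y, ‖deriv (f * g) y‖ₑ ≤ ‖deriv f y‖ₑ * ‖g y‖ₑ + ‖f y‖ₑ * ‖deriv g y‖ₑ :=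
    fun y => by
      rw [deriv_mul (hf y) (hg y)]
      exact enorm_mul_add_mul_le _ _ _ _
  calc ‖f x * g x‖ₑ ≤ ∫⁻ y, ‖deriv (f * g) y‖ₑ :=
        enorm_le_lintegral_enorm_deriv (hf.mul hg) (hfp.integrable_mul hgq) x
    _ ≤ ∫⁻ y, (‖deriv f y‖ₑ * ‖g y‖ₑ + ‖f y‖ₑ * ‖deriv g y‖ₑ) := lintegral_mono hderiv
    _ = (∫⁻ y, ‖deriv f y‖ₑ * ‖g y‖ₑ) + ∫⁻ y, ‖f y‖ₑ * ‖deriv g y‖ₑ :=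
        lintegral_add_left' (hf'.enorm.mul hgq.1.enorm) _
    _ ≤ eLpNorm (deriv f) p volume * eLpNorm g q volume +
          eLpNorm f p volume * eLpNorm (deriv g) q volume :=
        add_le_add (lintegral_enorm_mul_enorm_le p q hf' hgq.1)
          (lintegral_enorm_mul_enorm_le p q hfp.1 hg')

theorem lintegral_enorm_mul_sub_mul_neg_div_le (hp : p ≠ ∞) (hq : q ≠ ∞)
    (hf : Differentiable ℝ f) (hg : Differentiable ℝ g) :
    ∫⁻ s, ‖f s * g s - f (-s) * g (-s)‖ₑ / ‖s‖ₑ ≤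
      2 * q * (eLpNorm (deriv f) p volume * eLpNorm g q volume) +
        2 * p * (eLpNorm f p volume * eLpNorm (deriv g) q volume) := by
  have hf_neg : AEStronglyMeasurable (fun s => f (-s)) :=
    (hf.continuous.comp continuous_neg).aestronglyMeasurable
  have hnorm_neg : eLpNorm (fun s => f (-s)) p volume = eLpNorm f p volume := by
    simpa only [zero_sub] using eLpNorm_comp_const_sub f p 0
  have hleft := lintegral_enorm_sub_neg_div_mul_enorm_le p q hq hf
    hg.continuous.aestronglyMeasurable
  have hright := lintegral_enorm_sub_neg_div_mul_enorm_le q p hp hg hf_neg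
  rw [hnorm_neg, mul_comm (eLpNorm (deriv g) q volume)] at hright
  have htri : ∀ s, ‖f s * g s - f (-s) * g (-s)‖ₑ / ‖s‖ₑ ≤
      ‖f s - f (-s)‖ₑ / ‖s‖ₑ * ‖g s‖ₑ + ‖g s - g (-s)‖ₑ / ‖s‖ₑ * ‖f (-s)‖ₑ := fun s => by
    rw [← ENNReal.mul_div_right_comm, ← ENNReal.mul_div_right_comm, ← ENNReal.add_div,
      mul_comm ‖g s - g (-s)‖ₑ]
    gcongr
    have hsplit : f s * g s - f (-s) * g (-s) =
        (f s - f (-s)) * g s + f (-s) * (g s - g (-s)) := by noncomm_ring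
    rw [hsplit]
    exact enorm_mul_add_mul_le _ _ _ _
  refine (lintegral_mono htri).trans ?_
  rw [lintegral_add_left]
  · exact add_le_add hleft hright
  · exact ((hf.continuous.sub (hf.continuous.comp continuous_neg)).enorm.measurable.div
      continuous_enorm.measurable).mul hg.continuous.enorm.measurable

end Product

section Kernel

variable {E : Type*} [NormedAddCommGroup E] [NormedSpace ℝ E]

theorem enorm_integral_le_lintegral_enorm_add_comp_neg (w : ℝ → E) :
    ‖∫ s, w s‖ₑ ≤ 2⁻¹ * ∫⁻ s, ‖w s + w (-s)‖ₑ := by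
  by_cases hw : Integrable w
  · have hsymm : ∫ s, w s = (2⁻¹ : ℝ) • ∫ s, (w s + w (-s)) := by
      rw [integral_add hw hw.comp_neg, integral_neg_eq_self w volume, ← two_smul ℝ (∫ s, w s),
        inv_smul_smul₀ two_ne_zero]
    have htwo : ‖(2⁻¹ : ℝ)‖ₑ = 2⁻¹ := by simp [enorm_inv, Real.enorm_of_nonneg]
    rw [hsymm, enorm_smul, htwo]
    gcongr
    exact enorm_integral_le_lintegral_enorm _
  · simp [integral_undef hw]

theorem lintegral_ofReal_div_sq_add_sq {ε : ℝ} (hε : 0 < ε) :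
    ∫⁻ s : ℝ, ENNReal.ofReal (ε / (ε ^ 2 + s ^ 2)) = ENNReal.ofReal π := by
  have hscale : (fun s : ℝ => ε / (ε ^ 2 + s ^ 2)) = fun s => ε⁻¹ * (1 + (s / ε) ^ 2)⁻¹ := by
    ext s
    field_simp
  have hint : Integrable fun s : ℝ => ε⁻¹ * (1 + (s / ε) ^ 2)⁻¹ :=
    (integrable_inv_one_add_sq.comp_div hε.ne').const_mul _
  rw [← ofReal_integral_eq_lintegral_ofReal (hscale ▸ hint) (ae_of_all _ fun s => by positivity),
    hscale, integral_const_mul, Measure.integral_comp_div fun x : ℝ => (1 + x ^ 2)⁻¹,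
    integral_univ_inv_one_add_sq, abs_of_pos hε, smul_eq_mul, inv_mul_cancel_left₀ hε.ne']

theorem div_add_I_mul_add_div_add_I_mul_neg {ε : ℝ} (hε : 0 < ε) (z w : ℂ) (s : ℝ) :
    z / ((ε : ℂ) + Complex.I * s) + w / ((ε : ℂ) + Complex.I * (-s : ℝ)) =
      (ε / (ε ^ 2 + s ^ 2)) • (z + w) - Complex.I * (s / (ε ^ 2 + s ^ 2)) • (z - w) := by
  have hfactor : ((ε : ℂ) + Complex.I * s) * ((ε : ℂ) + Complex.I * (-s : ℝ)) = ε ^ 2 + s ^ 2 := by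
    push_cast
    linear_combination -(s : ℂ) ^ 2 * Complex.I_sq
  have hpos : (ε : ℂ) ^ 2 + (s : ℂ) ^ 2 ≠ 0 := by
    exact_mod_cast (by positivity : ε ^ 2 + s ^ 2 ≠ 0)
  rw [div_add_div _ _ (left_ne_zero_of_mul (hfactor ▸ hpos))
    (right_ne_zero_of_mul (hfactor ▸ hpos)), hfactor, Complex.real_smul, Complex.real_smul]
  push_cast
  field_simp
  ring

theorem enorm_div_sq_add_sq_le (ε s : ℝ) : ‖s / (ε ^ 2 + s ^ 2)‖ₑ ≤ ‖s‖ₑ⁻¹ := by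
  rcases eq_or_ne s 0 with rfl | hs
  · simp
  have : 0 < |s| := abs_pos.2 hs
  rw [← enorm_inv hs, Real.enorm_eq_ofReal_abs, Real.enorm_eq_ofReal_abs]
  refine ENNReal.ofReal_le_ofReal ?_
  calc |s / (ε ^ 2 + s ^ 2)| = |s| / (ε ^ 2 + |s| ^ 2) := by
        rw [abs_div, abs_of_nonneg (by positivity : 0 ≤ ε ^ 2 + s ^ 2), sq_abs]
    _ ≤ |s| / |s| ^ 2 := by
        gcongr
        exact le_add_of_nonneg_left (sq_nonneg ε)
    _ = |s⁻¹| := by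
        rw [abs_inv]
        field_simp

theorem enorm_div_add_I_mul_add_div_add_I_mul_neg_le {ε : ℝ} (hε : 0 < ε) (z w : ℂ) (s : ℝ) :
    ‖z / ((ε : ℂ) + Complex.I * s) + w / ((ε : ℂ) + Complex.I * (-s : ℝ))‖ₑ ≤
      ENNReal.ofReal (ε / (ε ^ 2 + s ^ 2)) * ‖z + w‖ₑ + ‖z - w‖ₑ / ‖s‖ₑ := by
  have hI : ‖Complex.I‖ₑ = 1 := by simp [← ofReal_norm]
  rw [div_add_I_mul_add_div_add_I_mul_neg hε]
  refine enorm_sub_le.trans ?_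
  rw [enorm_mul, enorm_smul, enorm_smul, hI, one_mul, Real.enorm_of_nonneg (by positivity),
    mul_comm ‖s / _‖ₑ, ENNReal.div_eq_inv_mul, mul_comm ‖s‖ₑ⁻¹]
  gcongr
  exact enorm_div_sq_add_sq_le ε s

theorem enorm_integral_div_add_I_mul_le {ε : ℝ} (hε : 0 < ε) {u : ℝ → ℂ} {M : ℝ≥0∞}
    (hM : ∀ s, ‖u s‖ₑ ≤ M) :
    ‖∫ s : ℝ, u s / ((ε : ℂ) + Complex.I * s)‖ₑ ≤
      ENNReal.ofReal π * M + 2⁻¹ * ∫⁻ s, ‖u s - u (-s)‖ₑ / ‖s‖ₑ := by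
  have hpointwise : ∀ s : ℝ,
      ‖u s / ((ε : ℂ) + Complex.I * s) + u (-s) / ((ε : ℂ) + Complex.I * (-s : ℝ))‖ₑ ≤
        ENNReal.ofReal (ε / (ε ^ 2 + s ^ 2)) * (2 * M) + ‖u s - u (-s)‖ₑ / ‖s‖ₑ := fun s => by
    refine (enorm_div_add_I_mul_add_div_add_I_mul_neg_le hε _ _ s).trans ?_
    gcongr
    rw [two_mul]
    exact (enorm_add_le _ _).trans (add_le_add (hM s) (hM (-s)))
  calc ‖∫ s : ℝ, u s / ((ε : ℂ) + Complex.I * s)‖ₑ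
      ≤ 2⁻¹ * ∫⁻ s : ℝ,
          ‖u s / ((ε : ℂ) + Complex.I * s) + u (-s) / ((ε : ℂ) + Complex.I * (-s : ℝ))‖ₑ :=
        enorm_integral_le_lintegral_enorm_add_comp_neg _
    _ ≤ 2⁻¹ * ∫⁻ s : ℝ,
          (ENNReal.ofReal (ε / (ε ^ 2 + s ^ 2)) * (2 * M) + ‖u s - u (-s)‖ₑ / ‖s‖ₑ) := by
        gcongr with s
        exact hpointwise s
    _ = ENNReal.ofReal π * M + 2⁻¹ * ∫⁻ s, ‖u s - u (-s)‖ₑ / ‖s‖ₑ := by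
        rw [lintegral_add_left (by fun_prop), lintegral_mul_const _ (by fun_prop),
          lintegral_ofReal_div_sq_add_sq hε, mul_add, mul_left_comm, ← mul_assoc 2⁻¹,
          ENNReal.inv_mul_cancel two_ne_zero ENNReal.ofNat_ne_top, one_mul]

end Kernel

section Bilinear

variable {p q : ℝ≥0∞} [p.HolderConjugate q] {g h : ℝ → ℂ}

theorem enorm_integral_mul_div_add_I_mul_le (hp : p ≠ ∞) (hq : q ≠ ∞)
    (hg : Differentiable ℝ g) (hgq : MemLp g q) (hh : Differentiable ℝ h) (hhp : MemLp h p)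
    {ε : ℝ} (hε : 0 < ε) :
    ‖∫ s : ℝ, h s * g s / ((ε : ℂ) + Complex.I * s)‖ₑ ≤
      (ENNReal.ofReal π + q) * (eLpNorm (deriv h) p volume * eLpNorm g q volume) +
        (ENNReal.ofReal π + p) * (eLpNorm h p volume * eLpNorm (deriv g) q volume) := by
  set a := eLpNorm (deriv h) p volume * eLpNorm g q volume
  set b := eLpNorm h p volume * eLpNorm (deriv g) q volume
  calc ‖∫ s : ℝ, h s * g s / ((ε : ℂ) + Complex.I * s)‖ₑ
      ≤ ENNReal.ofReal π * (a + b) +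
          2⁻¹ * ∫⁻ s, ‖h s * g s - h (-s) * g (-s)‖ₑ / ‖s‖ₑ :=
        enorm_integral_div_add_I_mul_le hε
          (enorm_mul_le_eLpNorm_deriv_mul_add p q hh hg hhp hgq)
    _ ≤ ENNReal.ofReal π * (a + b) + 2⁻¹ * (2 * q * a + 2 * p * b) := by
        gcongr
        exact lintegral_enorm_mul_sub_mul_neg_div_le p q hp hq hh hg
    _ = (ENNReal.ofReal π + q) * a + (ENNReal.ofReal π + p) * b := by
        simp only [mul_add, add_mul, ← mul_assoc, one_mul,
          ENNReal.inv_mul_cancel two_ne_zero ENNReal.ofNat_ne_top]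
        ring

end Bilinear

theorem stmt4_general {p q : ℝ≥0∞} [p.HolderConjugate q] (hp : p ≠ ∞) (hq : q ≠ ∞)
    {g h : ℝ → ℂ} (hg : Differentiable ℝ g) (hgq : MemLp g q) (hg' : MemLp (deriv g) q)
    (hh : Differentiable ℝ h) (hhp : MemLp h p) (hh' : MemLp (deriv h) p)
    {ε : ℝ} (hε : 0 < ε) (t : ℝ) :
    ‖∫ s : ℝ, h (t - s) * g (t - s) / ((ε : ℂ) + Complex.I * s)‖ ≤
      (π + q.toReal) *
          ((eLpNorm (deriv h) p volume).toReal * (eLpNorm g q volume).toReal) +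
        (π + p.toReal) *
          ((eLpNorm h p volume).toReal * (eLpNorm (deriv g) q volume).toReal) := by
  have hbound := enorm_integral_mul_div_add_I_mul_le hp hq
    (g := fun s => g (t - s)) (h := fun s => h (t - s))
    (hg.comp (by fun_prop)) (hgq.comp_measurePreserving (Measure.measurePreserving_sub_left _ t))
    (hh.comp (by fun_prop)) (hhp.comp_measurePreserving (Measure.measurePreserving_sub_left _ t)) hε
  simp only [eLpNorm_deriv_comp_const_sub, eLpNorm_comp_const_sub] at hbound
  have hg_fin := hgq.eLpNorm_ne_top
  have hg'_fin := hg'.eLpNorm_ne_top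
  have hh_fin := hhp.eLpNorm_ne_top
  have hh'_fin := hh'.eLpNorm_ne_top
  have hreal := ENNReal.toReal_mono (by finiteness) hbound
  rwa [toReal_enorm, ENNReal.toReal_add (by finiteness) (by finiteness), ENNReal.toReal_mul,
    ENNReal.toReal_mul, ENNReal.toReal_mul, ENNReal.toReal_mul,
    ENNReal.toReal_add (by finiteness) hq, ENNReal.toReal_add (by finiteness) hp,
    ENNReal.toReal_ofReal Real.pi_nonneg] at hreal

/-- Bilinear Hilbert-transform-type estimate: the convolution of the kernel
`H_ε(s) = (ε + i s)⁻¹` with a product `h·g` is bounded in `L^∞`, uniformly in `ε > 0`,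
by `C (‖h‖_{H¹}‖g‖_{L²} + ‖h‖_{L²}‖g‖_{H¹})`. -/
theorem stmt4 :
    ∃ C : ℝ, 0 < C ∧
      ∀ g h : ℝ → ℂ,
        ContDiff ℝ (⊤ : ℕ∞) g → HasCompactSupport g →
        ContDiff ℝ (⊤ : ℕ∞) h → HasCompactSupport h →
        ∀ ε : ℝ, 0 < ε → ∀ t : ℝ,
        ‖∫ s : ℝ, h (t - s) * g (t - s) / ((ε : ℂ) + Complex.I * (s : ℂ))‖
          ≤ C * (((eLpNorm h 2 volume).toReal + (eLpNorm (deriv h) 2 volume).toReal) *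
                (eLpNorm g 2 volume).toReal
              + (eLpNorm h 2 volume).toReal * (eLpNorm (deriv g) 2 volume).toReal) := by
  refine ⟨π + 2, by positivity, fun g h hg hgc hh hhc ε hε t => ?_⟩
  have hbound := stmt4_general (p := 2) (q := 2) (by simp) (by simp)
    (hg.differentiable (by simp)) (hg.continuous.memLp_of_hasCompactSupport hgc)
    ((hg.continuous_deriv (by simp)).memLp_of_hasCompactSupport hgc.deriv)
    (hh.differentiable (by simp)) (hh.continuous.memLp_of_hasCompactSupport hhc)
    ((hh.continuous_deriv (by simp)).memLp_of_hasCompactSupport hhc.deriv) hε t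
  rw [ENNReal.toReal_ofNat, ← mul_add] at hbound
  refine hbound.trans ?_
  gcongr
  exact le_add_of_nonneg_left ENNReal.toReal_nonneg
end
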